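/- arXiv:1408.2245 — 6 statements merged into one kernel-verified Lean document; each statement's English description precedes it below -/
import Mathlib

section
/- Let x > -1 be fixed. Then the map a ↦ L(x,a) is strictly increasing on the interval (4/15, ∞), and lim_{a→∞} L(x,a) = (1/2)·ln(x² + x + 1/3). -/
open Real Filter Set

/-- The digamma function ψ(x) = Γ'(x)/Γ(x), as the derivative of log ∘ Γ. -/
noncomputable def digamma (x : ℝ) : ℝ := deriv (fun y : ℝ => Real.log (Real.Gamma y)) x

/-- L(x,a) = (1/(90a²+2))·ln(x²+x+(3a+1)/3) + (45a²/(90a²+2))·ln(x²+x+(15a−1)/(45a)). -/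
noncomputable def L (x a : ℝ) : ℝ :=
  (1 / (90 * a ^ 2 + 2)) * Real.log (x ^ 2 + x + (3 * a + 1) / 3) +
    (45 * a ^ 2 / (90 * a ^ 2 + 2)) * Real.log (x ^ 2 + x + (15 * a - 1) / (45 * a))

lemma key_log (A B : ℝ) (hB : 0 < B) (hAB : B < A) :
    2 * (Real.log A - Real.log B) < (A - B) * (1 / A + 1 / B) := by
  have hA : 0 < A := hB.trans hAB
  have h1 : 0 < Real.log (A / B) := Real.log_pos ((one_lt_div hB).2 hAB)
  have h2 := Real.self_lt_sinh_iff.2 h1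
  rw [Real.sinh_log (by positivity), Real.log_div hA.ne' hB.ne'] at h2
  have : (A - B) * (1 / A + 1 / B) = A / B - (A / B)⁻¹ := by
    field_simp
    ring
  rw [this]
  linarith

lemma L_hasDeriv (x a A B : ℝ) (ha : 0 < a) (hA : A = x ^ 2 + x + (3 * a + 1) / 3)
    (hB : B = x ^ 2 + x + (15 * a - 1) / (45 * a)) (hA0 : 0 < A) (hB0 : 0 < B) :
    HasDerivAt (fun a : ℝ => L x a)
      (1 / (90 * a ^ 2 + 2) * ((1 / A + 1 / B) -
        90 * a / (45 * a ^ 2 + 1) * (Real.log A - Real.log B))) a := by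
  have hd : HasDerivAt (fun a : ℝ => 90 * a ^ 2 + 2) (180 * a) a := by
    have := ((hasDerivAt_pow 2 a).const_mul 90).add_const 2
    refine this.congr_deriv ?_
    norm_num
    ring
  have hn : HasDerivAt (fun a : ℝ => 45 * a ^ 2) (90 * a) a := by
    have := ((hasDerivAt_pow 2 a).const_mul 45)
    refine this.congr_deriv ?_
    norm_num
    ring
  have hne : 90 * a ^ 2 + 2 ≠ 0 := by positivity
  have hp := (hasDerivAt_const a (1 : ℝ)).fun_div hd hne
  have hq := hn.fun_div hd hne
  have hAd : HasDerivAt (fun a : ℝ => x ^ 2 + x + (3 * a + 1) / 3) 1 a := by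
    have := ((((hasDerivAt_id' a).const_mul 3).add_const 1).div_const 3).const_add (x ^ 2 + x)
    refine this.congr_deriv ?_
    norm_num
  have hBd : HasDerivAt (fun a : ℝ => x ^ 2 + x + (15 * a - 1) / (45 * a))
      (1 / (45 * a ^ 2)) a := by
    have := ((((hasDerivAt_id' a).const_mul 15).sub_const 1).fun_div
      ((hasDerivAt_id' a).const_mul 45) (by positivity)).const_add (x ^ 2 + x)
    refine this.congr_deriv ?_
    field_simp
    ring
  have hlA := hAd.log (by rw [← hA]; exact hA0.ne')
  have hlB := hBd.log (by rw [← hB]; exact hB0.ne')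
  have := (hp.fun_mul hlA).fun_add (hq.fun_mul hlB)
  rw [← hA, ← hB] at this
  unfold L
  refine this.congr_deriv ?_
  clear this hlA hlB hBd hAd hA hB
  have h45 : 45 * a ^ 2 + 1 ≠ 0 := by positivity
  have e : 90 * a ^ 2 + 2 = 2 * (45 * a ^ 2 + 1) := by ring
  rw [e]
  generalize Real.log A = u
  generalize Real.log B = v
  field_simp
  ring

/-- For fixed x > -1, a ↦ L(x,a) is strictly increasing on (4/15, ∞) and
lim_{a→∞} L(x,a) = (1/2)·ln(x² + x + 1/3). -/
theorem stmt_0 (x : ℝ) (hx : -1 < x) :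
    StrictMonoOn (fun a : ℝ => L x a) (Set.Ioi (4 / 15)) ∧
      Filter.Tendsto (fun a : ℝ => L x a) Filter.atTop
        (nhds ((1 / 2) * Real.log (x ^ 2 + x + 1 / 3))) := by
  have ht : -(1 / 4) ≤ x ^ 2 + x := by nlinarith [sq_nonneg (x + 1 / 2)]
  constructor
  · have main : ∀ a ∈ Set.Ioi (4 / 15 : ℝ), ∃ d, 0 < d ∧ HasDerivAt (fun a : ℝ => L x a) d a := by
      intro a ha
      have ha' : 4 / 15 < a := ha
      have ha0 : 0 < a := by linarith
      have hB0 : 0 < x ^ 2 + x + (15 * a - 1) / (45 * a) := by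
        have : 1 / 4 < (15 * a - 1) / (45 * a) := by
          rw [lt_div_iff₀ (by positivity)]
          linarith
        linarith
      have hdiff : (x ^ 2 + x + (3 * a + 1) / 3) - (x ^ 2 + x + (15 * a - 1) / (45 * a)) =
          (45 * a ^ 2 + 1) / (45 * a) := by
        field_simp
        ring
      have hpos : 0 < (45 * a ^ 2 + 1) / (45 * a) := by positivity
      have hAB : x ^ 2 + x + (15 * a - 1) / (45 * a) < x ^ 2 + x + (3 * a + 1) / 3 := by linarith
      refine ⟨_, ?_, L_hasDeriv x a _ _ ha0 rfl rfl (hB0.trans hAB) hB0⟩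
      have k := key_log _ _ hB0 hAB
      rw [hdiff] at k
      apply mul_pos (by positivity)
      rw [sub_pos]
      have e : 90 * a / (45 * a ^ 2 + 1) = 2 / ((45 * a ^ 2 + 1) / (45 * a)) := by
        field_simp
        ring
      rw [e, div_mul_eq_mul_div, div_lt_iff₀ hpos]
      linarith
    apply strictMonoOn_of_deriv_pos (convex_Ioi _)
    · intro a ha
      obtain ⟨d, _, h⟩ := main a ha
      exact h.continuousAt.continuousWithinAt
    · intro a ha
      rw [interior_Ioi] at ha
      obtain ⟨d, hd, h⟩ := main a ha
      rw [h.deriv]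
      exact hd
  · have hinv : Tendsto (fun a : ℝ => a⁻¹) atTop (nhds 0) := tendsto_inv_atTop_zero
    have h1 : Tendsto (fun a : ℝ => (1 / (90 * a ^ 2 + 2)) *
        Real.log (x ^ 2 + x + (3 * a + 1) / 3)) atTop (nhds 0) := by
      refine tendsto_of_tendsto_of_tendsto_of_le_of_le' tendsto_const_nhds hinv ?_ ?_
      · filter_upwards [eventually_ge_atTop 1] with a ha
        exact mul_nonneg (by positivity) (Real.log_nonneg (by linarith))
      · filter_upwards [eventually_ge_atTop 1, eventually_ge_atTop (x ^ 2 + x + 1 / 3)] with a ha hb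
        have hl := Real.log_le_self (x := x ^ 2 + x + (3 * a + 1) / 3) (by linarith)
        rw [one_div_mul_eq_div, div_le_iff₀ (by positivity)]
        have : a⁻¹ * (90 * a ^ 2 + 2) = 90 * a + 2 * a⁻¹ := by
          field_simp
        rw [this]
        have : 0 < a⁻¹ := by positivity
        linarith
    have hp : Tendsto (fun a : ℝ => 1 / (90 * a ^ 2 + 2)) atTop (nhds 0) := by
      refine tendsto_of_tendsto_of_tendsto_of_le_of_le' tendsto_const_nhds hinv ?_ ?_
      · filter_upwards with a
        positivity
      · filter_upwards [eventually_ge_atTop 1] with a ha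
        rw [← one_div]
        apply one_div_le_one_div_of_le (by linarith)
        nlinarith
    have hq : Tendsto (fun a : ℝ => 45 * a ^ 2 / (90 * a ^ 2 + 2)) atTop (nhds (1 / 2)) := by
      have := hp.const_sub (1 / 2)
      rw [sub_zero] at this
      refine this.congr fun a => ?_
      have : 90 * a ^ 2 + 2 ≠ 0 := by positivity
      field_simp
      ring
    have hB : Tendsto (fun a : ℝ => x ^ 2 + x + (15 * a - 1) / (45 * a)) atTop
        (nhds (x ^ 2 + x + 1 / 3)) := by
      have := (hinv.const_mul (1 / 45)).const_sub (x ^ 2 + x + 1 / 3)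
      rw [mul_zero, sub_zero] at this
      refine this.congr' ?_
      filter_upwards [eventually_ge_atTop 1] with a ha
      have : a ≠ 0 := by positivity
      field_simp
      ring
    have h2 := hq.mul (hB.log (by linarith))
    have := h1.add h2
    rw [zero_add] at this
    exact this
end

section
/- Let x > 0 be fixed. Then on the interval (1/15, ∞) the map a ↦ (∂L/∂x)(x,a) is strictly decreasing, the map a ↦ (∂²L/∂x²)(x,a) is strictly increasing, and the map a ↦ (∂³L/∂x³)(x,a) is strictly decreasing, where the partial derivatives are taken with respect to x. -/
open Real Filter Set

/-- The denominator `D` as a polynomial in `t`, with parameter `s`. -/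
noncomputable def auxD (s t : ℝ) : ℝ := (t ^ 2 + t) ^ 2 + s * (t ^ 2 + t) + s / 3 - 2 / 15

/-- Derivative of `auxD` with respect to `t ^ 2 + t`. -/
noncomputable def auxE (s t : ℝ) : ℝ := 2 * (t ^ 2 + t) + s

/-- Sum of the two nodes as a function of `a`. -/
noncomputable def auxS (a : ℝ) : ℝ := 2 / 3 + a - 1 / (45 * a)

lemma auxS_gt {a : ℝ} (ha : 1 / 15 < a) : 2 / 5 < auxS a := by
  have h0 : 0 < a := by linarith
  have : 1 / (45 * a) < 1 / 3 := by
    rw [div_lt_div_iff₀ (by positivity) (by norm_num)]; linarith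
  unfold auxS; linarith

lemma auxS_lt {a b : ℝ} (ha : 1 / 15 < a) (hab : a < b) : auxS a < auxS b := by
  have h0 : 0 < a := by linarith
  have : 1 / (45 * b) < 1 / (45 * a) := by
    apply one_div_lt_one_div_of_lt <;> linarith
  unfold auxS; linarith

lemma auxD_pos {s t : ℝ} (hs : 2 / 5 < s) (ht : 0 < t) : 0 < auxD s t := by
  unfold auxD
  have h1 : 0 < s * (t ^ 2 + t) := by positivity
  have h2 : 0 < (t ^ 2 + t) ^ 2 := by positivity
  linarith

lemma arg1_pos {a t : ℝ} (ha : 1 / 15 < a) (ht : 0 < t) : 0 < t ^ 2 + t + (3 * a + 1) / 3 := by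
  have h0 : 0 < a := by linarith
  positivity

lemma arg2_pos {a t : ℝ} (ha : 1 / 15 < a) (ht : 0 < t) :
    0 < t ^ 2 + t + (15 * a - 1) / (45 * a) := by
  have h0 : 0 < a := by linarith
  have : 0 < (15 * a - 1) / (45 * a) := div_pos (by linarith) (by positivity)
  positivity

lemma L_hasDerivAt {a t : ℝ} (ha : 1 / 15 < a) (ht : 0 < t) :
    HasDerivAt (fun t => L t a)
      ((2 * t + 1) * (t ^ 2 + t + auxS a - 1 / 3) / (2 * auxD (auxS a) t)) t := by
  have h0 : 0 < a := by linarith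
  have h1 := arg1_pos ha ht
  have h2 := arg2_pos ha ht
  have h3 := auxD_pos (auxS_gt ha) ht
  have hp : ∀ c : ℝ, HasDerivAt (fun t : ℝ => t ^ 2 + t + c) (2 * t + 1) t := by
    intro c
    have := (((hasDerivAt_id t).pow 2).add (hasDerivAt_id t)).add_const c
    refine HasDerivAt.congr_deriv (this) ?_; simp
  have := (((hp _).log h1.ne').const_mul (1 / (90 * a ^ 2 + 2))).add
    (((hp _).log h2.ne').const_mul (45 * a ^ 2 / (90 * a ^ 2 + 2)))
  unfold L
  refine HasDerivAt.congr_deriv (this) ?_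
  have hD : auxD (auxS a) t
      = (t ^ 2 + t + (3 * a + 1) / 3) * (t ^ 2 + t + (15 * a - 1) / (45 * a)) := by
    unfold auxD auxS; field_simp; ring
  have hN : (t ^ 2 + t + auxS a - 1 / 3) / 2
      = 1 / (90 * a ^ 2 + 2) * (t ^ 2 + t + (15 * a - 1) / (45 * a))
        + 45 * a ^ 2 / (90 * a ^ 2 + 2) * (t ^ 2 + t + (3 * a + 1) / 3) := by
    unfold auxS; field_simp; ring
  rw [hD]
  generalize t ^ 2 + t + (3 * a + 1) / 3 = X at *
  generalize t ^ 2 + t + (15 * a - 1) / (45 * a) = Y at *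
  generalize 1 / (90 * a ^ 2 + 2) = p at *
  generalize 45 * a ^ 2 / (90 * a ^ 2 + 2) = q at *
  have : t ^ 2 + t + auxS a - 1 / 3 = 2 * (p * Y + q * X) := by linarith
  rw [this]
  field_simp

lemma L_contDiffAt {a t : ℝ} (ha : 1 / 15 < a) (ht : 0 < t) (n : WithTop ℕ∞) :
    ContDiffAt ℝ n (fun t => L t a) t := by
  have h1 := (arg1_pos ha ht).ne'
  have h2 := (arg2_pos ha ht).ne'
  unfold L
  refine ContDiffAt.add (contDiffAt_const.mul (ContDiffAt.log ?_ h1))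
    (contDiffAt_const.mul (ContDiffAt.log ?_ h2)) <;> fun_prop

lemma iter_aux {f f1 f2 f3 : ℝ → ℝ} (h1 : ∀ t, 0 < t → HasDerivAt f (f1 t) t)
    (h2 : ∀ t, 0 < t → HasDerivAt f1 (f2 t) t) (h3 : ∀ t, 0 < t → HasDerivAt f2 (f3 t) t)
    {x : ℝ} (hx : 0 < x) : iteratedDeriv 1 f x = f1 x ∧ iteratedDeriv 2 f x = f2 x ∧
      iteratedDeriv 3 f x = f3 x := by
  have e1 : ∀ t, 0 < t → iteratedDeriv 1 f t = f1 t := fun t ht => by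
    rw [iteratedDeriv_one]; exact (h1 t ht).deriv
  have e2 : ∀ t, 0 < t → iteratedDeriv 2 f t = f2 t := fun t ht => by
    rw [iteratedDeriv_succ, ← (h2 t ht).deriv]
    apply Filter.EventuallyEq.deriv_eq
    filter_upwards [Ioi_mem_nhds ht] with y hy using e1 y hy
  have e3 : ∀ t, 0 < t → iteratedDeriv 3 f t = f3 t := fun t ht => by
    rw [iteratedDeriv_succ, ← (h3 t ht).deriv]
    apply Filter.EventuallyEq.deriv_eq
    filter_upwards [Ioi_mem_nhds ht] with y hy using e2 y hy
  exact ⟨e1 x hx, e2 x hx, e3 x hx⟩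

lemma auxD_hasDerivAt (s t : ℝ) : HasDerivAt (auxD s) ((2 * t + 1) * auxE s t) t := by
  have hp : HasDerivAt (fun t : ℝ => t ^ 2 + t) (2 * t + 1) t := by
    have := ((hasDerivAt_id t).pow 2).add (hasDerivAt_id t)
    refine HasDerivAt.congr_deriv (this) ?_; simp
  have := (((hp.pow 2).add (hp.const_mul s)).add_const (s / 3)).sub_const (2 / 15)
  unfold auxD auxE
  refine HasDerivAt.congr_deriv (this) ?_; simp; ring

lemma auxE_hasDerivAt (s t : ℝ) : HasDerivAt (auxE s) (2 * (2 * t + 1)) t := by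
  have hp : HasDerivAt (fun t : ℝ => t ^ 2 + t) (2 * t + 1) t := by
    have := ((hasDerivAt_id t).pow 2).add (hasDerivAt_id t)
    refine HasDerivAt.congr_deriv (this) ?_; simp
  exact (hp.const_mul 2).add_const s

/-- `y`-derivative of the product of the denominators. -/
noncomputable def auxQ (s r t : ℝ) : ℝ := auxD s t * auxE r t + auxD r t * auxE s t

/-- Second `y`-derivative of the product of the denominators. -/
noncomputable def auxR (s r t : ℝ) : ℝ := 2 * auxD s t + 2 * auxD r t + 2 * (auxE s t * auxE r t)

lemma w_hasDerivAt (t : ℝ) : HasDerivAt (fun t : ℝ => 2 * t + 1) 2 t := by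
  simpa using ((hasDerivAt_id t).const_mul 2).add_const 1

lemma P_hasDerivAt (s r t : ℝ) : HasDerivAt (fun t => auxD s t * auxD r t)
    ((2 * t + 1) * auxQ s r t) t := by
  refine HasDerivAt.congr_deriv ((auxD_hasDerivAt s t).mul (auxD_hasDerivAt r t)) ?_
  unfold auxQ; ring

lemma Q_hasDerivAt (s r t : ℝ) : HasDerivAt (auxQ s r) ((2 * t + 1) * auxR s r t) t := by
  refine HasDerivAt.congr_deriv (((auxD_hasDerivAt s t).mul (auxE_hasDerivAt r t)).add
    ((auxD_hasDerivAt r t).mul (auxE_hasDerivAt s t))) ?_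
  unfold auxR; ring

lemma H_hasDerivAt {s r t : ℝ} (hs : 2 / 5 < s) (hr : 2 / 5 < r) (ht : 0 < t) :
    HasDerivAt (fun t => (2 * t + 1) / (auxD s t * auxD r t))
      ((2 * (auxD s t * auxD r t) - (2 * t + 1) ^ 2 * auxQ s r t) / (auxD s t * auxD r t) ^ 2)
      t := by
  have hP : auxD s t * auxD r t ≠ 0 := (mul_pos (auxD_pos hs ht) (auxD_pos hr ht)).ne'
  refine HasDerivAt.congr_deriv ((w_hasDerivAt t).div (P_hasDerivAt s r t) hP) ?_
  ring

lemma H1_hasDerivAt {s r t : ℝ} (hs : 2 / 5 < s) (hr : 2 / 5 < r) (ht : 0 < t) :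
    HasDerivAt (fun t => (2 * (auxD s t * auxD r t) - (2 * t + 1) ^ 2 * auxQ s r t) /
        (auxD s t * auxD r t) ^ 2)
      ((2 * t + 1) * (2 * (2 * t + 1) ^ 2 * auxQ s r t ^ 2
        - 6 * (auxD s t * auxD r t) * auxQ s r t
        - (2 * t + 1) ^ 2 * (auxD s t * auxD r t) * auxR s r t) / (auxD s t * auxD r t) ^ 3)
      t := by
  have hP : auxD s t * auxD r t ≠ 0 := (mul_pos (auxD_pos hs ht) (auxD_pos hr ht)).ne'
  have h := (((P_hasDerivAt s r t).const_mul 2).sub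
    (((w_hasDerivAt t).pow 2).mul (Q_hasDerivAt s r t))).div
    ((P_hasDerivAt s r t).pow 2) (pow_ne_zero 2 hP)
  refine HasDerivAt.congr_deriv (h) ?_
  simp only [Pi.mul_apply, Pi.pow_apply, Pi.sub_apply]
  generalize auxD s t * auxD r t = P at *
  field_simp
  simp
  ring

lemma three_D_lt_wE {s t : ℝ} (hs : 2 / 5 < s) (ht : 0 < t) :
    3 * auxD s t < (2 * t + 1) ^ 2 * auxE s t := by
  unfold auxD auxE
  have hy : 0 < t ^ 2 + t := by positivity
  have : (2 * t + 1) ^ 2 = 4 * (t ^ 2 + t) + 1 := by ring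
  rw [this]
  generalize t ^ 2 + t = y at *
  have : 0 < s * y := by positivity
  nlinarith

lemma three_D_lt_E {s t : ℝ} (hs : 2 / 5 < s) (ht : 0 < t) :
    3 * auxD s t < auxE s t ^ 2 := by
  unfold auxD auxE
  have hy : 0 < t ^ 2 + t := by positivity
  generalize t ^ 2 + t = y at *
  have : 0 < s * y := by positivity
  nlinarith [sq_nonneg (s - 1 / 2)]

lemma H1_neg {s r t : ℝ} (hs : 2 / 5 < s) (hr : 2 / 5 < r) (ht : 0 < t) :
    (2 * (auxD s t * auxD r t) - (2 * t + 1) ^ 2 * auxQ s r t) / (auxD s t * auxD r t) ^ 2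
      < 0 := by
  have h1 := auxD_pos hs ht
  have h2 := auxD_pos hr ht
  apply div_neg_of_neg_of_pos _ (by positivity)
  have a1 := mul_lt_mul_of_pos_left (three_D_lt_wE hs ht) h2
  have a2 := mul_lt_mul_of_pos_left (three_D_lt_wE hr ht) h1
  have := mul_pos h1 h2
  unfold auxQ
  nlinarith

lemma H2_pos {s r t : ℝ} (hs : 2 / 5 < s) (hr : 2 / 5 < r) (ht : 0 < t) :
    0 < (2 * t + 1) * (2 * (2 * t + 1) ^ 2 * auxQ s r t ^ 2
        - 6 * (auxD s t * auxD r t) * auxQ s r t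
        - (2 * t + 1) ^ 2 * (auxD s t * auxD r t) * auxR s r t) / (auxD s t * auxD r t) ^ 3 := by
  have h1 := auxD_pos hs ht
  have h2 := auxD_pos hr ht
  have e1 : 0 < auxE s t := by unfold auxE; positivity
  have e2 : 0 < auxE r t := by unfold auxE; positivity
  have a1 := three_D_lt_wE hs ht
  have a2 := three_D_lt_wE hr ht
  have b1 := three_D_lt_E hs ht
  have b2 := three_D_lt_E hr ht
  refine div_pos (mul_pos (by positivity) ?_) (by positivity)
  unfold auxQ auxR
  have hW : 0 < (2 * t + 1) ^ 2 := by positivity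
  generalize (2 * t + 1) ^ 2 = W at *
  generalize auxD s t = A at *
  generalize auxD r t = B at *
  generalize auxE s t = E at *
  generalize auxE r t = F at *
  have c1 : A * B * (A * F) * 3 < W * ((A * F) * (B * E)) := by
    have := mul_lt_mul_of_pos_left a1 (show 0 < B * (A * F) by positivity)
    linarith
  have c2 : A * B * (B * E) * 3 < W * ((A * F) * (B * E)) := by
    have := mul_lt_mul_of_pos_left a2 (show 0 < A * (B * E) by positivity)
    linarith
  have d2 : W * (A * B * B) * 3 < W * (B * E) ^ 2 := by
    have := mul_lt_mul_of_pos_left b1 (show 0 < W * B ^ 2 by positivity)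
    linarith
  have d3 : W * (A * B * A) * 3 < W * (A * F) ^ 2 := by
    have := mul_lt_mul_of_pos_left b2 (show 0 < W * A ^ 2 by positivity)
    linarith
  have g : 0 ≤ W * (A * F - B * E) ^ 2 := by positivity
  have g2 : 0 < W * ((A * F) * (B * E)) := by positivity
  linarith

lemma diff_facts {a b x : ℝ} (ha : 1 / 15 < a) (hab : a < b) (hx : 0 < x) :
    0 < iteratedDeriv 1 (fun t => L t a) x - iteratedDeriv 1 (fun t => L t b) x ∧
    iteratedDeriv 2 (fun t => L t a) x - iteratedDeriv 2 (fun t => L t b) x < 0 ∧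
    0 < iteratedDeriv 3 (fun t => L t a) x - iteratedDeriv 3 (fun t => L t b) x := by
  have hb : 1 / 15 < b := ha.trans hab
  have hs := auxS_gt ha
  have hr := auxS_gt hb
  have hsr := auxS_lt ha hab
  set s := auxS a with hsdef
  set r := auxS b with hrdef
  have hk : 0 < (r - s) / 90 := by linarith
  have sub : ∀ n : ℕ, iteratedDeriv n (fun t => L t a) x - iteratedDeriv n (fun t => L t b) x
      = iteratedDeriv n ((fun t => L t a) - (fun t => L t b)) x := fun n =>
    (iteratedDeriv_sub (L_contDiffAt ha hx n) (L_contDiffAt hb hx n)).symm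
  rw [sub, sub, sub]
  obtain ⟨i1, i2, i3⟩ := iter_aux (f := (fun t => L t a) - (fun t => L t b))
    (f1 := fun t => (r - s) / 90 * ((2 * t + 1) / (auxD s t * auxD r t)))
    (fun t ht => by
      refine HasDerivAt.congr_deriv ((L_hasDerivAt ha ht).sub (L_hasDerivAt hb ht)) ?_
      rw [← hsdef, ← hrdef]
      have h1 := auxD_pos hs ht
      have h2 := auxD_pos hr ht
      have key : (t ^ 2 + t + s - 1 / 3) * auxD r t - (t ^ 2 + t + r - 1 / 3) * auxD s t
          = (r - s) / 45 := by unfold auxD; ring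
      have : r - s = 45 * ((t ^ 2 + t + s - 1 / 3) * auxD r t
        - (t ^ 2 + t + r - 1 / 3) * auxD s t) := by linarith
      rw [this]
      field_simp
      ring)
    (fun t ht => (H_hasDerivAt hs hr ht).const_mul _)
    (fun t ht => (H1_hasDerivAt hs hr ht).const_mul _) hx
  rw [i1, i2, i3]
  have h1 := auxD_pos hs hx
  have h2 := auxD_pos hr hx
  exact ⟨mul_pos hk (by positivity), mul_neg_of_pos_of_neg hk (H1_neg hs hr hx),
    mul_pos hk (H2_pos hs hr hx)⟩

/-- For fixed x > 0, on (1/15, ∞): a ↦ ∂L/∂x(x,a) is strictly decreasing,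
a ↦ ∂²L/∂x²(x,a) is strictly increasing, and a ↦ ∂³L/∂x³(x,a) is strictly decreasing. -/
theorem stmt_1 (x : ℝ) (hx : 0 < x) :
    StrictAntiOn (fun a : ℝ => deriv (fun t : ℝ => L t a) x) (Set.Ioi (1 / 15)) ∧
      StrictMonoOn (fun a : ℝ => iteratedDeriv 2 (fun t : ℝ => L t a) x) (Set.Ioi (1 / 15)) ∧
        StrictAntiOn (fun a : ℝ => iteratedDeriv 3 (fun t : ℝ => L t a) x) (Set.Ioi (1 / 15)) := by
  refine ⟨fun a ha b _ hab => ?_, fun a ha b _ hab => ?_, fun a ha b _ hab => ?_⟩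
  · have := (diff_facts ha hab hx).1
    rw [iteratedDeriv_one, iteratedDeriv_one] at this
    exact sub_pos.mp this
  · exact sub_neg.mp (diff_facts ha hab hx).2.1
  · exact sub_pos.mp (diff_facts ha hab hx).2.2
end

section
/- Let a₁ = (40 + 3√205)/105. Then for every x > -1 and every n ∈ {1,2,3}, one has (−1)ⁿ·F_{a₁}^{(n)}(x) < 0; that is, F_{a₁}'(x) > 0, F_{a₁}''(x) < 0 and F_{a₁}'''(x) > 0 for all x > -1. -/
open Real Filter Set

open Topology

lemma Mpos (s : ℝ) (hs : 0 ≤ s) : 0 < 124416 -1192320*s+ 6685760*s^2 -25547400*s^3+ 16540650*s^4+ 85851500*s^5+ 235935000*s^6 + 223807500*s^7+165068750*s^8 := by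
  have h : 0 < 124416 -1192320*s+ 6685760*s^2 -25547400*s^3+ 16540650*s^4+ 85851500*s^5+ 235935000*s^6 := by
    nlinarith [sq_nonneg (s-1/5), sq_nonneg (s^2 - s/5), mul_nonneg hs (sq_nonneg (s-1/5)), mul_nonneg hs (sq_nonneg (s^2-s/5)), sq_nonneg (s^3-s^2/5), sq_nonneg (s^2-1/25),mul_nonneg hs (sq_nonneg (s^2-1/25)), sq_nonneg (s^2 - s*2/5+1/25), mul_nonneg hs (sq_nonneg (s^2 - s*2/5+1/25)), sq_nonneg (s^3 - 1/125)]
  positivity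

lemma analyticAt_logGamma {x : ℝ} (hx : 0 < x) :
    AnalyticAt ℝ (fun y : ℝ => Real.log (Real.Gamma y)) x := by
  have h1 : AnalyticAt ℂ Complex.Gamma (x : ℂ) := by
    have ho : IsOpen {z : ℂ | 0 < z.re} := isOpen_lt continuous_const Complex.continuous_re
    have hd : DifferentiableOn ℂ Complex.Gamma {z : ℂ | 0 < z.re} := by
      intro z hz
      refine (Complex.differentiableAt_Gamma z ?_).differentiableWithinAt
      intro m hm
      simp only [mem_ofPred_eq, hm, Complex.neg_re, Complex.natCast_re] at hz
      have : (0 : ℝ) ≤ m := Nat.cast_nonneg m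
      linarith
    exact hd.analyticAt (ho.mem_nhds (by simpa using hx))
  have h2 : ContDiffAt ℝ ⊤ (fun y : ℝ => (Complex.Gamma (y : ℂ)).re) x :=
    (h1.contDiffAt (n := ⊤)).real_of_complex
  have h3 : AnalyticAt ℝ Real.Gamma x := h2.analyticAt
  exact h3.log (Real.Gamma_pos_of_pos hx)

lemma analyticAt_digamma {x : ℝ} (hx : 0 < x) : AnalyticAt ℝ digamma x :=
  (analyticAt_logGamma hx).deriv

lemma logGamma_rec {x : ℝ} (hx : 0 < x) :
    Real.log (Real.Gamma (x + 1)) = Real.log (Real.Gamma x) + Real.log x := by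
  rw [Gamma_add_one hx.ne', log_mul hx.ne' (Gamma_pos_of_pos hx).ne', add_comm]

lemma digamma_rec {x : ℝ} (hx : 0 < x) : digamma (x + 1) = digamma x + 1 / x := by
  unfold digamma
  rw [← deriv_comp_add_const, one_div, ← deriv_log,
    ← deriv_add (analyticAt_logGamma hx).differentiableAt (differentiableAt_log hx.ne')]
  apply EventuallyEq.deriv_eq
  filter_upwards [eventually_gt_nhds hx] with y hy using logGamma_rec hy

lemma digamma_lb {x : ℝ} (hx : 0 < x) : Real.log x ≤ digamma (x + 1) := by
  have hc : ConvexOn ℝ (Ioi 0) (fun y : ℝ => Real.log (Real.Gamma y)) := convexOn_log_Gamma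
  refine (le_of_eq ?_).trans <| hc.slope_le_deriv (mem_Ioi.mpr hx)
      (mem_Ioi.mpr (by linarith : (0 : ℝ) < x + 1)) (by linarith)
      (analyticAt_logGamma (by linarith)).differentiableAt
  rw [slope_def_field, logGamma_rec hx]
  ring

lemma digamma_ub {x : ℝ} (hx : 0 < x) : digamma x ≤ Real.log x := by
  have hc : ConvexOn ℝ (Ioi 0) (fun y : ℝ => Real.log (Real.Gamma y)) := convexOn_log_Gamma
  refine (hc.deriv_le_slope (mem_Ioi.mpr hx)
      (mem_Ioi.mpr (by linarith : (0 : ℝ) < x + 1)) (by linarith)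
      (analyticAt_logGamma hx).differentiableAt).trans (le_of_eq ?_)
  rw [slope_def_field, logGamma_rec hx]
  ring

/-- Telescoping principle. -/
lemma telescoping (n : ℕ) : ∀ G : ℝ → ℝ, (∀ x, -1 < x → AnalyticAt ℝ G x) →
    (∀ x, -1 < x → Tendsto (fun k : ℕ => G (x + k)) atTop (𝓝 0)) →
    (∀ x, -1 < x → 0 ≤ iteratedDeriv n (fun t => G t - G (t + 1)) x) →
    ∀ x, -1 < x → 0 ≤ iteratedDeriv n G x := by
  induction n with
  | zero =>
    intro G _ hG hE x hx
    simp only [iteratedDeriv_zero] at hE ⊢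
    have hanti : ∀ k : ℕ, G (x + k) ≤ G x := by
      intro k
      induction k with
      | zero => simp
      | succ k ih =>
        have := hE (x + k) (by have : (0:ℝ) ≤ k := Nat.cast_nonneg k
                               linarith)
        push_cast
        rw [← add_assoc]
        linarith
    exact le_of_tendsto' (hG x hx) hanti
  | succ n ih =>
    intro G hA hG hE x hx
    have hA' : ∀ h : ℝ, 0 ≤ h → ∀ x, -1 < x → AnalyticAt ℝ (fun t => G (t + h)) x := by
      intro h hh x hx
      exact AnalyticAt.fun_comp (g := G) (f := fun t => t + h) (hA (x + h) (by linarith)) (by fun_prop)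
    have hEA : ∀ x, -1 < x → AnalyticAt ℝ (fun t => G t - G (t + 1)) x :=
      fun x hx => (hA x hx).fun_sub (hA' 1 (by norm_num) x hx)
    have hmono : MonotoneOn (iteratedDeriv n (fun t => G t - G (t + 1))) (Ioi (-1)) := by
      have hd : ∀ x, -1 < x →
          DifferentiableAt ℝ (iteratedDeriv n (fun t => G t - G (t + 1))) x := by
        intro x hx
        rw [iteratedDeriv_eq_iterate]
        exact ((hEA x hx).iterated_deriv n).differentiableAt
      refine monotoneOn_of_deriv_nonneg (convex_Ioi _)
        (fun x hx => (hd x hx).continuousAt.continuousWithinAt) ?_ ?_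
      · rw [interior_Ioi]
        exact fun x hx => (hd x hx).differentiableWithinAt
      · rw [interior_Ioi]
        intro x hx
        rw [← iteratedDeriv_succ]
        exact hE x hx
    have key : ∀ h : ℝ, 0 ≤ h → ∀ x, -1 < x →
        iteratedDeriv n G x ≤ iteratedDeriv n G (x + h) := by
      intro h hh x hx
      have h1 := ih (fun t => G (t + h) - G t)
        (fun x hx => (hA' h hh x hx).fun_sub (hA x hx))
        (by
          intro x hx
          have := (hG (x + h) (by linarith)).sub (hG x hx)
          simp only [sub_zero] at this
          refine this.congr (fun k => ?_)
          rw [add_right_comm])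
        (by
          intro x hx
          have heq : (fun t => (G (t + h) - G t) - (G (t + 1 + h) - G (t + 1)))
              = fun t => (fun s => G s - G (s + 1)) (t + h) - (fun s => G s - G (s + 1)) t := by
            funext t
            simp only
            rw [add_right_comm]
            ring
          rw [heq, iteratedDeriv_fun_sub
            ((AnalyticAt.fun_comp (g := fun s => G s - G (s + 1)) (f := fun t => t + h)
              (hEA (x + h) (by linarith)) (by fun_prop)).contDiffAt) (hEA x hx).contDiffAt]
          have hc := congrFun (iteratedDeriv_comp_add_const n (fun s => G s - G (s + 1)) h) x
          have := hmono (mem_Ioi.mpr hx) (mem_Ioi.mpr (by linarith : -1 < x + h)) (by linarith)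
          linarith)
        x hx
      rw [iteratedDeriv_fun_sub (hA' h hh x hx).contDiffAt (hA x hx).contDiffAt,
        iteratedDeriv_comp_add_const] at h1
      simp only at h1
      linarith
    have hmG : MonotoneOn (iteratedDeriv n G) (Ioi (-1)) := by
      intro y hy z hz hyz
      have := key (z - y) (by linarith) y hy
      simpa using this
    rw [iteratedDeriv_succ]
    rw [← derivWithin_of_isOpen isOpen_Ioi (mem_Ioi.mpr hx)]
    exact hmG.derivWithin_nonneg

/-- strict version, with explicit sign -/
lemma telescoping_strict (n : ℕ) (ε : ℝ) (G : ℝ → ℝ) (hA : ∀ x, -1 < x → AnalyticAt ℝ G x)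
    (hG : ∀ x, -1 < x → Tendsto (fun k : ℕ => G (x + k)) atTop (𝓝 0))
    (hE : ∀ x, -1 < x → 0 < ε * iteratedDeriv n (fun t => G t - G (t + 1)) x) (x : ℝ)
    (hx : -1 < x) : 0 < ε * iteratedDeriv n G x := by
  have hA1 : ∀ x, -1 < x → AnalyticAt ℝ (fun t => G (t + 1)) x := by
    intro x hx
    exact AnalyticAt.fun_comp (g := G) (f := fun t => t + 1) (hA (x + 1) (by linarith)) (by fun_prop)
  have h1 : ∀ x, -1 < x → 0 ≤ ε * iteratedDeriv n G x := by
    intro x hx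
    have := telescoping n (fun t => ε * G t) (fun x hx => analyticAt_const.fun_mul (hA x hx))
      (fun x hx => by simpa using (hG x hx).const_mul ε)
      (fun x hx => by
        have h2 : (fun t => ε * G t - ε * G (t + 1)) = fun t => ε * (G t - G (t + 1)) := by
          funext t; ring
        rw [h2, iteratedDeriv_const_mul_field]
        exact (hE x hx).le) x hx
    rwa [iteratedDeriv_const_mul_field] at this
  have h2 := hE x hx
  rw [iteratedDeriv_fun_sub (hA x hx).contDiffAt (hA1 x hx).contDiffAt,
    iteratedDeriv_comp_add_const] at h2
  have h3 := h1 (x + 1) (by linarith)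
  simp only at h2
  linarith

lemma quad_pos {p : ℝ} (hp : 1 / 4 < p) (t : ℝ) : 0 < t ^ 2 + t + p := by
  nlinarith [sq_nonneg (t + 1 / 2)]

lemma tendsto_log_quad (p : ℝ) :
    Tendsto (fun t : ℝ => Real.log (t ^ 2 + t + p) - 2 * Real.log t) atTop (𝓝 0) := by
  have h1 : Tendsto (fun t : ℝ => 1 + t⁻¹ + p * (t⁻¹ * t⁻¹)) atTop (𝓝 1) := by
    have h := tendsto_inv_atTop_zero (𝕜 := ℝ)
    have := (h.const_add 1).add ((h.mul h).const_mul p)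
    simpa using this
  have h2 := h1.log one_ne_zero
  rw [Real.log_one] at h2
  refine h2.congr' ?_
  filter_upwards [eventually_gt_atTop 0, h1.eventually (lt_mem_nhds (zero_lt_one))] with t ht h3
  have h4 : t ^ 2 + t + p = t ^ 2 * (1 + t⁻¹ + p * (t⁻¹ * t⁻¹)) := by
    field_simp
  rw [h4, Real.log_mul (by positivity) h3.ne', Real.log_pow]
  push_cast
  ring

lemma tendsto_digamma :
    Tendsto (fun t : ℝ => digamma (t + 1) - Real.log t) atTop (𝓝 0) := by
  have h1 : Tendsto (fun t : ℝ => Real.log (1 + t⁻¹)) atTop (𝓝 0) := by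
    have h := (tendsto_inv_atTop_zero (𝕜 := ℝ)).const_add 1
    rw [add_zero] at h
    have h2 := h.log one_ne_zero
    rwa [Real.log_one] at h2
  refine tendsto_of_tendsto_of_tendsto_of_le_of_le' tendsto_const_nhds h1 ?_ ?_
  · filter_upwards [eventually_gt_atTop 0] with t ht
    have := digamma_lb ht
    linarith
  · filter_upwards [eventually_gt_atTop 0] with t ht
    have h2 := digamma_ub (by linarith : 0 < t + 1)
    have h3 : t + 1 = t * (1 + t⁻¹) := by field_simp
    have h4 : Real.log (t + 1) = Real.log t + Real.log (1 + t⁻¹) := by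
      rw [h3, Real.log_mul ht.ne' (by positivity)]
    linarith

/-- the polynomial in the denominator of the derivative of the difference -/
noncomputable def gg (u : ℝ) : ℝ :=
  1225 * u ^ 10 + 1050 * u ^ 8 + 1065 * u ^ 6 - 460 * u ^ 4 + 144 * u ^ 2

noncomputable def gg1 (u : ℝ) : ℝ :=
  12250 * u ^ 9 + 8400 * u ^ 7 + 6390 * u ^ 5 - 1840 * u ^ 3 + 288 * u

noncomputable def gg2 (u : ℝ) : ℝ :=
  110250 * u ^ 8 + 58800 * u ^ 6 + 31950 * u ^ 4 - 5520 * u ^ 2 + 288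

lemma gg_pos {u : ℝ} (hu : 0 < u) : 0 < gg u := by
  have h : 0 < 1065 * (u ^ 2) ^ 2 - 460 * u ^ 2 + 144 := by
    nlinarith [sq_nonneg (u ^ 2 - 230 / 1065)]
  have : gg u = 1225 * u ^ 10 + 1050 * u ^ 8 + u ^ 2 * (1065 * (u ^ 2) ^ 2 - 460 * u ^ 2 + 144) := by
    unfold gg; ring
  rw [this]; positivity

lemma gg1_pos {u : ℝ} (hu : 0 < u) : 0 < gg1 u := by
  have h : 0 < 6390 * (u ^ 2) ^ 2 - 1840 * u ^ 2 + 288 := by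
    nlinarith [sq_nonneg (u ^ 2 - 920 / 6390)]
  have : gg1 u = 12250 * u ^ 9 + 8400 * u ^ 7 + u * (6390 * (u ^ 2) ^ 2 - 1840 * u ^ 2 + 288) := by
    unfold gg1; ring
  rw [this]; positivity

lemma gg2_pos {u : ℝ} (hu : 0 < u) : 0 < 2 * gg1 u ^ 2 - gg u * gg2 u := by
  have h := mul_pos (pow_pos hu 2) (Mpos (u ^ 2) (by positivity))
  have h2 : ∀ a b : ℝ, a = b → 0 < b → 0 < a := fun a b e hb => e ▸ hb
  refine h2 _ _ ?_ h
  unfold gg gg1 gg2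
  ring

lemma hasDerivAt_gg (u : ℝ) : HasDerivAt gg (gg1 u) u := by
  have h := ((((hasDerivAt_pow 10 u).const_mul 1225).fun_add ((hasDerivAt_pow 8 u).const_mul 1050)).fun_add
    ((hasDerivAt_pow 6 u).const_mul 1065)).fun_sub ((hasDerivAt_pow 4 u).const_mul 460) |>.fun_add
    ((hasDerivAt_pow 2 u).const_mul 144)
  refine HasDerivAt.congr_deriv (h) (Eq.symm ?_)
  unfold gg1; norm_num; ring

lemma hasDerivAt_gg1 (u : ℝ) : HasDerivAt gg1 (gg2 u) u := by
  have h := ((((hasDerivAt_pow 9 u).const_mul 12250).fun_add ((hasDerivAt_pow 7 u).const_mul 8400)).fun_add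
    ((hasDerivAt_pow 5 u).const_mul 6390)).fun_sub ((hasDerivAt_pow 3 u).const_mul 1840) |>.fun_add
    ((hasDerivAt_id' u).const_mul 288)
  refine HasDerivAt.congr_deriv (h) (Eq.symm ?_)
  unfold gg2; norm_num; ring

lemma hasDerivAt_r1 {u : ℝ} (hu : 0 < u) :
    HasDerivAt (fun u => 144 / gg u) (-144 * gg1 u / gg u ^ 2) u := by
  refine HasDerivAt.congr_deriv ((hasDerivAt_const u (144 : ℝ)).fun_div (hasDerivAt_gg u) (gg_pos hu).ne') (Eq.symm ?_)
  ring

lemma hasDerivAt_r2 {u : ℝ} (hu : 0 < u) :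
    HasDerivAt (fun u => -144 * gg1 u / gg u ^ 2)
      (144 * (2 * gg1 u ^ 2 - gg u * gg2 u) / gg u ^ 3) u := by
  have hg := (gg_pos hu).ne'
  refine HasDerivAt.congr_deriv (((hasDerivAt_gg1 u).const_mul (-144)).fun_div ((hasDerivAt_gg u).fun_pow 2)
    (pow_ne_zero 2 hg)) (Eq.symm ?_)
  field_simp
  ring

/-- the derivative of the difference -/
lemma hasDerivAt_diff {p q A : ℝ} (hp : 1 / 4 < p) (hq : 1 / 4 < q) (hpq : p + q = 10 / 7)
    (hpq' : p * q = 12 / 35) (hA : 2 * A * (p - q) = 1 / 3 - q) {x : ℝ} (hx : -1 < x) :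
    HasDerivAt (fun t => (-1 / (t + 1)) - (A * Real.log (t ^ 2 + t + p) +
        (1 / 2 - A) * Real.log (t ^ 2 + t + q)) + (A * Real.log ((t + 1) ^ 2 + (t + 1) + p) +
        (1 / 2 - A) * Real.log ((t + 1) ^ 2 + (t + 1) + q)))
      (144 / gg (x + 1)) x := by
  have hu : 0 < x + 1 := by linarith
  have hl : ∀ p : ℝ, 1 / 4 < p → ∀ x : ℝ, HasDerivAt (fun t => Real.log (t ^ 2 + t + p))
      ((2 * x + 1) / (x ^ 2 + x + p)) x := by
    intro p hp x
    have h := ((hasDerivAt_pow 2 x).fun_add (hasDerivAt_id' x)).add_const p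
    refine HasDerivAt.congr_deriv (h.log (quad_pos hp x).ne') (Eq.symm ?_)
    norm_num
  have hl1 : ∀ p : ℝ, 1 / 4 < p → HasDerivAt (fun t => Real.log ((t + 1) ^ 2 + (t + 1) + p))
      ((2 * (x + 1) + 1) / ((x + 1) ^ 2 + (x + 1) + p)) x :=
    fun p hp => (hl p hp (x + 1)).comp_add_const x 1
  have h1 : HasDerivAt (fun t : ℝ => -1 / (t + 1)) (1 / (x + 1) ^ 2) x := by
    refine HasDerivAt.congr_deriv ((hasDerivAt_const x (-1 : ℝ)).fun_div ((hasDerivAt_id' x).add_const 1) hu.ne') (Eq.symm ?_)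
    norm_num
  have h := (h1.fun_sub (((hl p hp x).const_mul A).fun_add ((hl q hq x).const_mul (1 / 2 - A)))).fun_add
    (((hl1 p hp).const_mul A).fun_add ((hl1 q hq).const_mul (1 / 2 - A)))
  refine HasDerivAt.congr_deriv (h) (Eq.symm ?_)
  obtain ⟨u, rfl⟩ : ∃ u, x = u - 1 := ⟨x + 1, by ring⟩
  have e1 : u - 1 + 1 = u := by ring
  rw [e1] at hu ⊢
  have hP : ∀ p : ℝ, 1 / 4 < p →
      (2 * u + 1) / (u ^ 2 + u + p) - (2 * (u - 1) + 1) / ((u - 1) ^ 2 + (u - 1) + p)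
       = 2 * (p - u ^ 2) / ((u ^ 2 + p) ^ 2 - u ^ 2) ∧ (u ^ 2 + p) ^ 2 - u ^ 2 ≠ 0 := by
    intro p hp
    have a1 := (quad_pos hp u).ne'
    have a2 := (quad_pos hp (u - 1)).ne'
    have a3 : (u ^ 2 + p) ^ 2 - u ^ 2 = (u ^ 2 + u + p) * ((u - 1) ^ 2 + (u - 1) + p) := by ring
    refine ⟨?_, by rw [a3]; exact mul_ne_zero a1 a2⟩
    rw [a3, div_sub_div _ _ a1 a2]
    congr 1
    ring
  obtain ⟨b1, c1⟩ := hP p hp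
  obtain ⟨b2, c2⟩ := hP q hq
  have hgg : gg u = 1225 * u ^ 2 * (((u ^ 2 + p) ^ 2 - u ^ 2) * ((u ^ 2 + q) ^ 2 - u ^ 2)) := by
    obtain rfl : q = 10 / 7 - p := by linarith
    have hp2 : p ^ 2 = 10 / 7 * p - 12 / 35 := by linarith
    have hp3 : p ^ 3 = 10 / 7 * p ^ 2 - 12 / 35 * p := by linear_combination p * hp2
    have hp4 : p ^ 4 = 10 / 7 * p ^ 3 - 12 / 35 * p ^ 2 := by linear_combination p ^ 2 * hp2
    unfold gg
    ring_nf
    rw [hp4, hp3, hp2]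
    ring
  have hfin : 1 / u ^ 2 + A * (2 * (p - u ^ 2) / ((u ^ 2 + p) ^ 2 - u ^ 2)) +
      (1 / 2 - A) * (2 * (q - u ^ 2) / ((u ^ 2 + q) ^ 2 - u ^ 2)) = 144 / gg u := by
    rw [hgg]
    have key : ((u ^ 2 + p) ^ 2 - u ^ 2) * ((u ^ 2 + q) ^ 2 - u ^ 2) +
        2 * A * u ^ 2 * ((p - u ^ 2) * ((u ^ 2 + q) ^ 2 - u ^ 2) -
          (q - u ^ 2) * ((u ^ 2 + p) ^ 2 - u ^ 2))
        + u ^ 2 * (q - u ^ 2) * ((u ^ 2 + p) ^ 2 - u ^ 2) = 144 / 1225 := by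
      have e : (p - u ^ 2) * ((u ^ 2 + q) ^ 2 - u ^ 2) -
          (q - u ^ 2) * ((u ^ 2 + p) ^ 2 - u ^ 2) =
          (p - q) * (3 * u ^ 4 - u ^ 2 + u ^ 2 * (p + q) - p * q) := by ring
      have e2 : 2 * A * u ^ 2 * ((p - q) * (3 * u ^ 4 - u ^ 2 + u ^ 2 * (p + q) - p * q)) =
          u ^ 2 * (2 * A * (p - q)) * (3 * u ^ 4 - u ^ 2 + u ^ 2 * (p + q) - p * q) := by ring
      rw [e, e2, hA]
      obtain rfl : q = 10 / 7 - p := by linarith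
      have hp2 : p ^ 2 = 10 / 7 * p - 12 / 35 := by linarith
      have hp3 : p ^ 3 = 10 / 7 * p ^ 2 - 12 / 35 * p := by linear_combination p * hp2
      have hp4 : p ^ 4 = 10 / 7 * p ^ 3 - 12 / 35 * p ^ 2 := by linear_combination p ^ 2 * hp2
      ring_nf
      rw [hp4, hp3, hp2]
      ring
    generalize (u ^ 2 + p) ^ 2 - u ^ 2 = P at *
    generalize (u ^ 2 + q) ^ 2 - u ^ 2 = Q at *
    field_simp
    linear_combination 1225 * key
  rw [← hfin, ← b1, ← b2]
  ring

theorem stmt_3 (x : ℝ) (hx : -1 < x) :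
    ∀ n ∈ ({1, 2, 3} : Set ℕ),
      (-1 : ℝ) ^ n *
        iteratedDeriv n (fun t : ℝ => digamma (t + 1) - L t ((40 + 3 * Real.sqrt 205) / 105)) x
        < 0 := by
  obtain ⟨a, ha⟩ : ∃ a : ℝ, a = (40 + 3 * Real.sqrt 205) / 105 := ⟨_, rfl⟩
  have hs := Real.sq_sqrt (by norm_num : (0 : ℝ) ≤ 205)
  have hs1 : 14 < Real.sqrt 205 := Real.lt_sqrt_of_sq_lt (by norm_num)
  have hs2 : Real.sqrt 205 < 29 / 2 := (Real.sqrt_lt' (by norm_num)).2 (by norm_num)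
  have hq2 : 315 * a ^ 2 - 240 * a - 7 = 0 := by rw [ha]; nlinarith
  have ha1 : 78 / 100 < a := by rw [ha]; linarith
  have ha2 : a < 80 / 100 := by rw [ha]; linarith
  rw [← ha]
  have ha0 : 0 < a := by linarith
  obtain ⟨p, hp⟩ : ∃ p : ℝ, p = (3 * a + 1) / 3 := ⟨_, rfl⟩
  obtain ⟨q, hq⟩ : ∃ q : ℝ, q = (15 * a - 1) / (45 * a) := ⟨_, rfl⟩
  obtain ⟨A, hA⟩ : ∃ A : ℝ, A = 1 / (90 * a ^ 2 + 2) := ⟨_, rfl⟩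
  have hq' : q = 23 / 21 - a := by
    rw [hq]; field_simp; linarith
  have hL : ∀ t, L t a = A * Real.log (t ^ 2 + t + p) +
        (1 / 2 - A) * Real.log (t ^ 2 + t + q) := by
    intro t
    unfold L
    have : 45 * a ^ 2 / (90 * a ^ 2 + 2) = 1 / 2 - A := by
      rw [hA]; field_simp; ring
    rw [this, ← hp, ← hq, ← hA]
  have hp1 : 1 / 4 < p := by rw [hp]; linarith
  have hq1 : 1 / 4 < q := by rw [hq']; linarith
  have hpq : p + q = 10 / 7 := by rw [hp, hq']; ring
  have hpq' : p * q = 12 / 35 := by rw [hp, hq']; nlinarith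
  have hAA : 2 * A * (p - q) = 1 / 3 - q := by
    rw [hA, hp, hq]; field_simp; ring
  obtain ⟨F, hF⟩ : ∃ F : ℝ → ℝ, F = fun t : ℝ => digamma (t + 1) - L t a := ⟨_, rfl⟩
  rw [← hF]
  have hFt : ∀ t, F t = digamma (t + 1) - (A * Real.log (t ^ 2 + t + p) +
        (1 / 2 - A) * Real.log (t ^ 2 + t + q)) := by
    intro t; rw [hF]; simp only [hL]
  have hAn : ∀ x, -1 < x → AnalyticAt ℝ F x := by
    intro x hx
    have h1 : AnalyticAt ℝ (fun t => digamma (t + 1)) x :=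
      AnalyticAt.fun_comp (g := digamma) (f := fun t => t + 1)
        (analyticAt_digamma (by linarith)) (by fun_prop)
    have h2 : ∀ p : ℝ, 1 / 4 < p → AnalyticAt ℝ (fun t : ℝ => Real.log (t ^ 2 + t + p)) x :=
      fun p hp => AnalyticAt.log (by fun_prop) (quad_pos hp x)
    rw [funext hFt]
    exact h1.fun_sub ((analyticAt_const.fun_mul (h2 p hp1)).fun_add
      (analyticAt_const.fun_mul (h2 q hq1)))
  have hT : Tendsto F atTop (𝓝 0) := by
    have h := tendsto_digamma.sub (((tendsto_log_quad p).const_mul A).add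
      ((tendsto_log_quad q).const_mul (1 / 2 - A)))
    simp only [mul_zero, add_zero, sub_zero] at h
    refine h.congr (fun t => ?_)
    rw [hFt]; ring
  have hT' : ∀ x, -1 < x → Tendsto (fun k : ℕ => F (x + k)) atTop (𝓝 0) := fun x _ =>
    hT.comp (tendsto_atTop_add_const_left _ x tendsto_natCast_atTop_atTop)
  have hE1 : ∀ x, -1 < x → deriv (fun t => F t - F (t + 1)) x = 144 / gg (x + 1) := by
    intro x hx
    rw [← (hasDerivAt_diff hp1 hq1 hpq hpq' hAA hx).deriv]
    apply EventuallyEq.deriv_eq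
    filter_upwards [eventually_gt_nhds hx] with t ht
    rw [hFt, hFt, digamma_rec (by linarith : 0 < t + 1)]
    ring
  have hE2 : ∀ x, -1 < x → deriv (deriv (fun t => F t - F (t + 1))) x =
      -144 * gg1 (x + 1) / gg (x + 1) ^ 2 := by
    intro x hx
    rw [← ((hasDerivAt_r1 (by linarith : 0 < x + 1)).comp_add_const x 1).deriv]
    apply EventuallyEq.deriv_eq
    filter_upwards [eventually_gt_nhds hx] with t ht using hE1 t ht
  have hE3 : ∀ x, -1 < x → deriv (deriv (deriv (fun t => F t - F (t + 1)))) x =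
      144 * (2 * gg1 (x + 1) ^ 2 - gg (x + 1) * gg2 (x + 1)) / gg (x + 1) ^ 3 := by
    intro x hx
    rw [← ((hasDerivAt_r2 (by linarith : 0 < x + 1)).comp_add_const x 1).deriv]
    apply EventuallyEq.deriv_eq
    filter_upwards [eventually_gt_nhds hx] with t ht using hE2 t ht
  intro n hn
  suffices h : 0 < (-(-1 : ℝ) ^ n) * iteratedDeriv n F x by linarith
  refine telescoping_strict n _ F hAn hT' ?_ x hx
  intro y hy
  have hy1 : 0 < y + 1 := by linarith
  have g0 := gg_pos hy1
  have g1 := gg1_pos hy1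
  have g2 := gg2_pos hy1
  rcases hn with rfl | rfl | rfl
  · rw [iteratedDeriv_succ, iteratedDeriv_zero, hE1 y hy]
    have : 0 < 144 / gg (y + 1) := by positivity
    linarith
  · rw [iteratedDeriv_succ, iteratedDeriv_succ, iteratedDeriv_zero, hE2 y hy]
    have : 0 < 144 * gg1 (y + 1) / gg (y + 1) ^ 2 := by positivity
    have e : -144 * gg1 (y + 1) / gg (y + 1) ^ 2 = -(144 * gg1 (y + 1) / gg (y + 1) ^ 2) := by ring
    rw [e]
    linarith
  · rw [iteratedDeriv_succ, iteratedDeriv_succ, iteratedDeriv_succ, iteratedDeriv_zero, hE3 y hy]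
    have : 0 < 144 * (2 * gg1 (y + 1) ^ 2 - gg (y + 1) * gg2 (y + 1)) / gg (y + 1) ^ 3 := by
      positivity
    linarith
end

section
/- For all x > -1/2, one has ψ''(x + 1/2) < −(20/3)·(47040x⁶ + 75600x⁴ + 30116x² − 1917)/(560x⁴ + 520x² + 27)². -/
open Real Filter Set

lemma logGamma_analytic {y : ℝ} (hy : 0 < y) :
    AnalyticAt ℝ (fun y : ℝ => Real.log (Real.Gamma y)) y := by
  have h1 : AnalyticAt ℂ Complex.Gamma (y : ℂ) := by
    have hd : DifferentiableOn ℂ Complex.Gamma {z : ℂ | 0 < z.re} := by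
      intro z hz
      refine (Complex.differentiableAt_Gamma z ?_).differentiableWithinAt
      intro m h
      have hz' : 0 < z.re := hz
      rw [h] at hz'
      simp at hz'
      have : (0 : ℝ) ≤ m := Nat.cast_nonneg m
      linarith
    refine hd.analyticAt ((isOpen_lt continuous_const Complex.continuous_re).mem_nhds ?_)
    simpa using hy
  have h2 : AnalyticAt ℝ Real.Gamma y := h1.re_ofReal
  exact h2.log (Real.Gamma_pos_of_pos hy)

lemma digamma_analytic {y : ℝ} (hy : 0 < y) : AnalyticAt ℝ digamma y :=
  (logGamma_analytic hy).deriv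

lemma digamma_add_one {y : ℝ} (hy : 0 < y) : digamma (y + 1) = digamma y + y⁻¹ := by
  unfold digamma
  rw [← deriv_comp_add_const (fun y : ℝ => Real.log (Real.Gamma y)) 1 y]
  have : (fun y : ℝ => Real.log (Real.Gamma (y + 1))) =ᶠ[nhds y]
      fun y => Real.log (Real.Gamma y) + Real.log y := by
    filter_upwards [lt_mem_nhds hy] with z hz
    rw [Real.Gamma_add_one hz.ne', Real.log_mul hz.ne' (Real.Gamma_pos_of_pos hz).ne', add_comm]
  rw [this.deriv_eq]
  exact ((logGamma_analytic hy).differentiableAt.hasDerivAt.add (Real.hasDerivAt_log hy.ne')).deriv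

lemma deriv_digamma_add_one {y : ℝ} (hy : 0 < y) :
    deriv digamma (y + 1) = deriv digamma y - (y ^ 2)⁻¹ := by
  rw [← deriv_comp_add_const digamma 1 y]
  have : (fun y : ℝ => digamma (y + 1)) =ᶠ[nhds y] fun y => digamma y + y⁻¹ := by
    filter_upwards [lt_mem_nhds hy] with z hz
    exact digamma_add_one hz
  rw [this.deriv_eq]
  exact ((digamma_analytic hy).differentiableAt.hasDerivAt.add (hasDerivAt_inv hy.ne')).deriv

lemma deriv2_digamma_add_one {y : ℝ} (hy : 0 < y) :
    deriv (deriv digamma) (y + 1) = deriv (deriv digamma) y + 2 / y ^ 3 := by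
  rw [← deriv_comp_add_const (deriv digamma) 1 y]
  have : (fun y : ℝ => deriv digamma (y + 1)) =ᶠ[nhds y]
      fun y => deriv digamma y - (y ^ 2)⁻¹ := by
    filter_upwards [lt_mem_nhds hy] with z hz
    exact deriv_digamma_add_one hz
  rw [this.deriv_eq]
  have h := (digamma_analytic hy).deriv.differentiableAt.hasDerivAt.sub
    (((hasDerivAt_id y).pow 2).inv (pow_ne_zero 2 hy.ne'))
  refine h.deriv.trans ?_
  simp
  field_simp
  ring

lemma digamma_mono : MonotoneOn digamma (Ioi 0) := by
  have h := Real.convexOn_log_Gamma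
  have := h.monotoneOn_deriv (fun y hy => (logGamma_analytic hy).differentiableAt)
  exact this

lemma digamma_add_nat {y : ℝ} (hy : 0 < y) (n : ℕ) :
    digamma (y + n) = digamma y + ∑ k ∈ Finset.range n, (y + k)⁻¹ := by
  induction n with
  | zero => simp
  | succ n ih =>
    have : 0 < y + n := by positivity
    rw [Finset.sum_range_succ, ← add_assoc, ← ih, ← digamma_add_one this]
    push_cast
    ring_nf

/-- Approximations of the digamma function. -/
noncomputable def approxDi (n : ℕ) (y : ℝ) : ℝ :=
  digamma n - ∑ k ∈ Finset.range n, (y + k)⁻¹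

lemma approxDi_tendsto {y : ℝ} (hy : 0 < y) :
    Tendsto (fun n => approxDi n y) atTop (nhds (digamma y)) := by
  obtain ⟨m, hm⟩ := exists_nat_ge y
  have key : ∀ᶠ n : ℕ in atTop, digamma y - m / n ≤ approxDi n y ∧ approxDi n y ≤ digamma y := by
    filter_upwards [eventually_gt_atTop 0] with n hn
    have hn' : (0 : ℝ) < n := by exact_mod_cast hn
    have e := digamma_add_nat hy n
    have l1 : digamma n ≤ digamma (y + n) :=
      digamma_mono hn' (show 0 < y + n by positivity) (by linarith)
    have l2 : digamma (y + n) ≤ digamma (n + m) :=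
      digamma_mono (show 0 < y + n by positivity) (show (0 : ℝ) < n + m by positivity) (by linarith)
    have l3 : ∑ k ∈ Finset.range m, ((n : ℝ) + k)⁻¹ ≤ m / n := by
      calc _ ≤ ∑ k ∈ Finset.range m, ((n : ℝ))⁻¹ := by
            apply Finset.sum_le_sum
            intro k _
            apply inv_anti₀ hn'
            have : (0 : ℝ) ≤ k := Nat.cast_nonneg k
            linarith
        _ = m / n := by simp [div_eq_mul_inv]
    rw [digamma_add_nat hn' m] at l2
    unfold approxDi
    constructor <;> linarith
  refine tendsto_of_tendsto_of_tendsto_of_le_of_le' (g := fun n : ℕ => digamma y - m / n) ?_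
    tendsto_const_nhds (key.mono fun _ h => h.1) (key.mono fun _ h => h.2)
  simpa using tendsto_const_nhds.sub (tendsto_const_div_atTop_nhds_zero_nat (m : ℝ))

lemma approxDi_concave (n : ℕ) : ConcaveOn ℝ (Ioi 0) (approxDi n) := by
  unfold approxDi
  refine (concaveOn_const _ (convex_Ioi 0)).sub ?_
  induction n with
  | zero => simpa using convexOn_const (0 : ℝ) (convex_Ioi (0 : ℝ))
  | succ n ih =>
    simp only [Finset.sum_range_succ]
    refine ih.add ?_
    have h : ConvexOn ℝ (Ioi (0 : ℝ)) (fun x : ℝ => x⁻¹) := by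
      simpa using convexOn_zpow (𝕜 := ℝ) (-1)
    have h2 := h.translate_left (n : ℝ)
    refine h2.subset ?_ (convex_Ioi 0)
    intro z hz
    have : (0 : ℝ) < z := hz
    have h0 : (0 : ℝ) ≤ n := Nat.cast_nonneg n
    simp
    linarith

lemma digamma_concave : ConcaveOn ℝ (Ioi 0) digamma := by
  refine ⟨convex_Ioi 0, fun x hx y hy a b ha hb hab => ?_⟩
  have hz := convex_Ioi (0 : ℝ) hx hy ha hb hab
  exact le_of_tendsto_of_tendsto'
    (((approxDi_tendsto hx).const_smul a).add ((approxDi_tendsto hy).const_smul b))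
    (approxDi_tendsto hz) (fun n => (approxDi_concave n).2 hx hy ha hb hab)

lemma deriv2_digamma_nonpos {y : ℝ} (hy : 0 < y) : deriv (deriv digamma) y ≤ 0 := by
  have h := digamma_concave.antitoneOn_deriv
    (fun y hy => (digamma_analytic hy).differentiableAt)
  rw [← derivWithin_of_isOpen isOpen_Ioi hy]
  exact h.derivWithin_nonpos

/-- The rational bound. -/
noncomputable def ratB (x : ℝ) : ℝ :=
  -(20 / 3) * (47040 * x ^ 6 + 75600 * x ^ 4 + 30116 * x ^ 2 - 1917) /
        (560 * x ^ 4 + 520 * x ^ 2 + 27) ^ 2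

lemma ratB_step {x : ℝ} (hx : -(1 / 2) < x) :
    ratB (x + 1) < ratB x + 2 / (x + 1 / 2) ^ 3 := by
  obtain ⟨y, rfl⟩ : ∃ y, x = y - 1 / 2 := ⟨x + 1 / 2, by ring⟩
  have hy : 0 < y := by linarith
  unfold ratB
  have q1 : 0 < 560 * (y - 1 / 2) ^ 4 + 520 * (y - 1 / 2) ^ 2 + 27 := by positivity
  have q2 : 0 < 560 * (y - 1 / 2 + 1) ^ 4 + 520 * (y - 1 / 2 + 1) ^ 2 + 27 := by positivity
  have hN : 0 < 2717908992 - 17364418560 * y ^ 2 + 60303605760 * y ^ 4 + 79272345600 * y ^ 6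
      + 115605504000 * y ^ 8 := by
    have : 0 < 2717908992 - 17364418560 * y ^ 2 + 60303605760 * y ^ 4 := by
      nlinarith [sq_nonneg (y ^ 2 - 1 / 7)]
    positivity
  rw [← sub_pos]
  have : 0 < (2717908992 - 17364418560 * y ^ 2 + 60303605760 * y ^ 4 + 79272345600 * y ^ 6
      + 115605504000 * y ^ 8) / ((560 * (y - 1 / 2) ^ 4 + 520 * (y - 1 / 2) ^ 2 + 27) ^ 2 *
      (560 * (y - 1 / 2 + 1) ^ 4 + 520 * (y - 1 / 2 + 1) ^ 2 + 27) ^ 2 * y ^ 3) := by positivity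
  refine this.trans_eq ?_
  have e : y - 1 / 2 + 1 / 2 = y := by ring
  rw [e]
  generalize hA : 560 * (y - 1 / 2) ^ 4 + 520 * (y - 1 / 2) ^ 2 + 27 = A at *
  generalize hB : 560 * (y - 1 / 2 + 1) ^ 4 + 520 * (y - 1 / 2 + 1) ^ 2 + 27 = B at *
  rw [div_add_div _ _ (by positivity) (by positivity), div_sub_div _ _ (by positivity) (by positivity),
    div_eq_div_iff (by positivity) (by positivity)]
  have : 2717908992 - 17364418560 * y ^ 2 + 60303605760 * y ^ 4 + 79272345600 * y ^ 6
      + 115605504000 * y ^ 8 = 2 * A ^ 2 * B ^ 2 - 20 / 3 * y ^ 3 *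
      ((47040 * (y - 1 / 2) ^ 6 + 75600 * (y - 1 / 2) ^ 4 + 30116 * (y - 1 / 2) ^ 2 - 1917) * B ^ 2 -
       (47040 * (y - 1 / 2 + 1) ^ 6 + 75600 * (y - 1 / 2 + 1) ^ 4
        + 30116 * (y - 1 / 2 + 1) ^ 2 - 1917) * A ^ 2) := by
    subst hA hB
    ring
  rw [this]
  ring

lemma ratB_tendsto (x : ℝ) : Tendsto (fun n : ℕ => ratB (x + n)) atTop (nhds 0) := by
  have h : Tendsto ratB atTop (nhds 0) := by
    have h1 : Tendsto (fun x : ℝ => x⁻¹) atTop (nhds 0) := tendsto_inv_atTop_zero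
    have h2 : ContinuousAt (fun t : ℝ => -(20 / 3) * t ^ 2 *
      (47040 + 75600 * t ^ 2 + 30116 * t ^ 4 - 1917 * t ^ 6) /
        (560 + 520 * t ^ 2 + 27 * t ^ 4) ^ 2) 0 := by
      apply ContinuousAt.div (by fun_prop) (by fun_prop)
      norm_num
    have h3 := h2.tendsto.comp h1
    simp only [ne_eq, OfNat.ofNat_ne_zero, not_false_eq_true, zero_pow, mul_zero, zero_mul,
      zero_div] at h3
    refine h3.congr' ?_
    filter_upwards [eventually_gt_atTop 0] with z hz
    unfold ratB
    simp only [Function.comp]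
    field_simp
  exact h.comp (tendsto_atTop_add_const_left _ x tendsto_natCast_atTop_atTop)

/-- For all x > −1/2, ψ''(x + 1/2) < −(20/3)·(47040x⁶ + 75600x⁴ + 30116x² − 1917)/(560x⁴ + 520x² + 27)². -/
theorem stmt_5 (x : ℝ) (hx : -(1 / 2) < x) :
    iteratedDeriv 2 digamma (x + 1 / 2) <
      -(20 / 3) * (47040 * x ^ 6 + 75600 * x ^ 4 + 30116 * x ^ 2 - 1917) /
        (560 * x ^ 4 + 520 * x ^ 2 + 27) ^ 2 := by
  have e : iteratedDeriv 2 digamma = deriv (deriv digamma) := by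
    rw [iteratedDeriv_succ, iteratedDeriv_one]
  rw [e]
  change _ < ratB x
  have step : ∀ z : ℝ, -(1 / 2) < z →
      ratB (z + 1) - deriv (deriv digamma) (z + 1 + 1 / 2) <
        ratB z - deriv (deriv digamma) (z + 1 / 2) := by
    intro z hz
    have h1 := ratB_step hz
    have h2 := deriv2_digamma_add_one (y := z + 1 / 2) (by linarith)
    have h3 : z + 1 + 1 / 2 = z + 1 / 2 + 1 := by ring
    rw [h3, h2]
    linarith
  have hle : ∀ z : ℝ, -(1 / 2) < z → ∀ n : ℕ,
      ratB (z + n) ≤ ratB z - deriv (deriv digamma) (z + 1 / 2) := by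
    intro z hz n
    have : ∀ n : ℕ, ratB (z + n) - deriv (deriv digamma) (z + n + 1 / 2) ≤
        ratB z - deriv (deriv digamma) (z + 1 / 2) := by
      intro n
      induction n with
      | zero => simp
      | succ n ih =>
        have hn : (0 : ℝ) ≤ n := Nat.cast_nonneg n
        have := step (z + n) (by linarith)
        push_cast
        rw [← add_assoc]
        linarith
    have hn : (0 : ℝ) ≤ n := Nat.cast_nonneg n
    have h1 := this n
    have h2 := deriv2_digamma_nonpos (y := z + n + 1 / 2) (by linarith)
    linarith
  have h0 : 0 ≤ ratB (x + 1) - deriv (deriv digamma) (x + 1 + 1 / 2) :=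
    le_of_tendsto' (ratB_tendsto (x + 1)) (hle (x + 1) (by linarith))
  have := step x hx
  linarith
end

section
/- Let a > 1/15. The function F_a is strictly increasing and strictly concave on (0, ∞) if and only if a ≥ a₁, where a₁ = (40 + 3√205)/105. -/
open Real Filter Set

/-- positivity of a second derivative gives strict convexity on a half line -/
lemma aux_conv (f f1 f2 : ℝ → ℝ) (M : ℝ) (h1 : ∀ x, M < x → HasDerivAt f (f1 x) x)
    (h2 : ∀ x, M < x → HasDerivAt f1 (f2 x) x) (h3 : ∀ x, M < x → 0 < f2 x) :
    StrictConvexOn ℝ (Ioi M) f := by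
  have hm : StrictMonoOn f1 (Ioi M) := by
    apply strictMonoOn_of_deriv_pos (convex_Ioi M)
    · intro x hx
      exact (h2 x hx).continuousAt.continuousWithinAt
    · intro x hx
      rw [interior_Ioi] at hx
      rw [(h2 x hx).deriv]
      exact h3 x hx
  apply StrictMonoOn.strictConvexOn_of_deriv (convex_Ioi M)
  · intro x hx
    exact (h1 x hx).continuousAt.continuousWithinAt
  · rw [interior_Ioi]
    intro x hx y hy hxy
    rw [(h1 x hx).deriv, (h1 y hy).deriv]
    exact hm hx hy hxy

/-- a strictly concave function with a finite limit is strictly increasing -/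
lemma aux_mono (f : ℝ → ℝ) (M l : ℝ) (hf : StrictConcaveOn ℝ (Ioi M) f)
    (hl : Tendsto f atTop (nhds l)) : StrictMonoOn f (Ioi M) := by
  intro x hx y hy hxy
  simp only [mem_Ioi] at hx hy
  by_contra! hc
  have h1 := hf.slope_anti_adjacent (x := x) (y := y) (z := y + 1) hx
    (by simp only [mem_Ioi]; linarith) hxy (by linarith)
  have h0 : (f y - f x) / (y - x) ≤ 0 :=
    div_nonpos_of_nonpos_of_nonneg (by linarith) (by linarith)
  have hs : f (y + 1) - f y < 0 := by
    have : (f (y + 1) - f y) / (y + 1 - y) = f (y + 1) - f y := by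
      rw [show y + 1 - y = (1 : ℝ) by ring, div_one]
    linarith
  have hb : Tendsto (fun z : ℝ => f (y + 1) + (f (y + 1) - f y) * (z - (y + 1))) atTop atBot := by
    apply tendsto_atBot_add_const_left
    apply Tendsto.const_mul_atTop_of_neg hs
    exact tendsto_atTop_add_const_right _ _ tendsto_id
  have hle : ∀ᶠ z in atTop, f z ≤ f (y + 1) + (f (y + 1) - f y) * (z - (y + 1)) := by
    filter_upwards [eventually_gt_atTop (y + 1)] with z hz
    have h2 := hf.slope_anti_adjacent (x := y) (y := y + 1) (z := z) hy
      (by simp only [mem_Ioi]; linarith) (by linarith) hz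
    rw [show y + 1 - y = (1 : ℝ) by ring, div_one, div_lt_iff₀ (by linarith)] at h2
    linarith
  have hbot := tendsto_atBot_mono' _ hle hb
  exact not_tendsto_nhds_of_tendsto_atBot hbot l hl

lemma aux_diff (x : ℝ) (hx : 0 < x) :
    DifferentiableAt ℝ (fun y : ℝ => Real.log (Real.Gamma y)) x := by
  apply DifferentiableAt.log
  · apply Real.differentiableAt_Gamma
    intro m
    have : (0 : ℝ) ≤ m := Nat.cast_nonneg m
    linarith
  · exact (Real.Gamma_pos_of_pos hx).ne'

lemma aux_logGamma (x : ℝ) (hx : 0 < x) :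
    Real.log (Real.Gamma (x + 1)) = Real.log x + Real.log (Real.Gamma x) := by
  rw [Real.Gamma_add_one hx.ne', Real.log_mul hx.ne' (Real.Gamma_pos_of_pos hx).ne']

lemma aux_rec (x : ℝ) (hx : 0 < x) : digamma (x + 1) = digamma x + 1 / x := by
  have h1 : HasDerivAt (fun y : ℝ => Real.log (Real.Gamma (y + 1))) (digamma (x + 1)) x := by
    have := (aux_diff (x + 1) (by linarith)).hasDerivAt
    exact this.comp_add_const x 1
  have h2 : HasDerivAt (fun y : ℝ => Real.log y + Real.log (Real.Gamma y)) (x⁻¹ + digamma x) x :=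
    (Real.hasDerivAt_log hx.ne').add (aux_diff x hx).hasDerivAt
  have h3 : (fun y : ℝ => Real.log (Real.Gamma (y + 1))) =ᶠ[nhds x]
      (fun y : ℝ => Real.log y + Real.log (Real.Gamma y)) := by
    filter_upwards [lt_mem_nhds hx] with y hy
    exact aux_logGamma y hy
  have h4 := (h2.congr_of_eventuallyEq h3).unique h1
  rw [← h4, one_div]
  ring

lemma aux_upper (x : ℝ) (hx : 0 < x) : digamma x ≤ Real.log x := by
  have h := Real.convexOn_log_Gamma.deriv_le_slope (x := x) (y := x + 1) hx
    (by simp only [mem_Ioi]; linarith) (by linarith) (aux_diff x hx)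
  rw [slope_def_field] at h
  simp only [Function.comp] at h
  rw [aux_logGamma x hx] at h
  have : (Real.log x + Real.log (Real.Gamma x) - Real.log (Real.Gamma x)) / (x + 1 - x)
    = Real.log x := by
    rw [show x + 1 - x = (1 : ℝ) by ring]; ring
  rw [this] at h
  exact h

lemma aux_lower (x : ℝ) (hx : 0 < x) : Real.log x ≤ digamma (x + 1) := by
  have h := Real.convexOn_log_Gamma.slope_le_deriv (x := x) (y := x + 1) hx
    (by simp only [mem_Ioi]; linarith) (by linarith) (aux_diff (x + 1) (by linarith))
  rw [slope_def_field] at h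
  simp only [Function.comp] at h
  rw [aux_logGamma x hx] at h
  have : (Real.log x + Real.log (Real.Gamma x) - Real.log (Real.Gamma x)) / (x + 1 - x)
    = Real.log x := by
    rw [show x + 1 - x = (1 : ℝ) by ring]; ring
  rw [this] at h
  exact h

lemma aux_ratio (c d : ℝ) :
    Tendsto (fun x : ℝ => Real.log (1 + c * x⁻¹ + d * (x⁻¹) ^ 2)) atTop (nhds 0) := by
  have h : Tendsto (fun x : ℝ => 1 + c * x⁻¹ + d * (x⁻¹) ^ 2) atTop (nhds 1) := by
    have h0 := tendsto_inv_atTop_zero (𝕜 := ℝ)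
    have := ((h0.const_mul c).const_add 1).add ((h0.pow 2).const_mul d)
    simpa using this
  have := h.log one_ne_zero
  simpa using this

/-- the limit of F_a at infinity -/
lemma aux_lim (a : ℝ) (ha : 1 / 15 < a) :
    Tendsto (fun x : ℝ => digamma (x + 1) - L x a) atTop (nhds 0) := by
  have hp : 0 < (3 * a + 1) / 3 := by linarith
  have hq : 0 < (15 * a - 1) / (45 * a) := div_pos (by linarith) (by linarith)
  have hK : 0 < 90 * a ^ 2 + 2 := by positivity
  have e1 : Tendsto (fun x : ℝ => digamma (x + 1) - Real.log x) atTop (nhds 0) := by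
    apply tendsto_of_tendsto_of_tendsto_of_le_of_le' tendsto_const_nhds (aux_ratio 1 0)
    · filter_upwards [eventually_gt_atTop 0] with x hx
      have := aux_lower x hx
      linarith
    · filter_upwards [eventually_gt_atTop 0] with x hx
      have h1 := aux_upper (x + 1) (by linarith)
      have h2 : 1 + 1 * x⁻¹ + 0 * (x⁻¹) ^ 2 = (x + 1) / x := by field_simp; ring
      rw [h2, Real.log_div (by linarith) hx.ne']
      linarith
  have e2 : Tendsto (fun x : ℝ => L x a - Real.log x) atTop (nhds 0) := by
    have h := ((aux_ratio 1 ((3 * a + 1) / 3)).const_mul (1 / (90 * a ^ 2 + 2))).add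
      ((aux_ratio 1 ((15 * a - 1) / (45 * a))).const_mul (45 * a ^ 2 / (90 * a ^ 2 + 2)))
    simp only [mul_zero, add_zero] at h
    refine h.congr' ?_
    filter_upwards [eventually_gt_atTop 0] with x hx
    have key : ∀ c : ℝ, 0 < c → Real.log (1 + 1 * x⁻¹ + c * (x⁻¹) ^ 2)
        = Real.log (x ^ 2 + x + c) - 2 * Real.log x := by
      intro c hc
      have : 1 + 1 * x⁻¹ + c * (x⁻¹) ^ 2 = (x ^ 2 + x + c) / x ^ 2 := by field_simp
      rw [this, Real.log_div (by positivity) (by positivity), Real.log_pow]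
      norm_num
    rw [key _ hp, key _ hq, L]
    have hab : 1 / (90 * a ^ 2 + 2) = 1 / 2 - 45 * a ^ 2 / (90 * a ^ 2 + 2) := by
      field_simp; ring
    rw [hab]; ring
  have := e1.sub e2
  simp only [sub_zero] at this
  refine this.congr ?_
  intro x; ring

lemma aux_d1 (c x : ℝ) (hc : 0 < c) (hx : 0 < x) :
    HasDerivAt (fun x : ℝ => Real.log (x ^ 2 + x + c)) ((2 * x + 1) / (x ^ 2 + x + c)) x := by
  have h : HasDerivAt (fun x : ℝ => x ^ 2 + x + c) (2 * x + 1) x := by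
    have := (((hasDerivAt_id x).pow 2).add (hasDerivAt_id x)).add_const c
    simpa using this
  exact h.log (by positivity)

lemma aux_d2 (c x : ℝ) (hc : 0 < c) (hx : 0 < x) :
    HasDerivAt (fun x : ℝ => (2 * x + 1) / (x ^ 2 + x + c))
      ((2 * (x ^ 2 + x + c) - (2 * x + 1) * (2 * x + 1)) / (x ^ 2 + x + c) ^ 2) x := by
  have h : HasDerivAt (fun x : ℝ => x ^ 2 + x + c) (2 * x + 1) x := by
    have := (((hasDerivAt_id x).pow 2).add (hasDerivAt_id x)).add_const c
    simpa using this
  have h2 : HasDerivAt (fun x : ℝ => 2 * x + 1) 2 x := by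
    have := ((hasDerivAt_id x).const_mul 2).add_const 1
    simpa using this
  exact h2.div h (by positivity)

/-- first derivative of L -/
noncomputable def L1 (x a : ℝ) : ℝ :=
  (1 / (90 * a ^ 2 + 2)) * ((2 * x + 1) / (x ^ 2 + x + (3 * a + 1) / 3)) +
    (45 * a ^ 2 / (90 * a ^ 2 + 2)) * ((2 * x + 1) / (x ^ 2 + x + (15 * a - 1) / (45 * a)))

/-- numerator of the second derivative of a logarithm of a quadratic, divided by its square -/
noncomputable def Q2 (c x : ℝ) : ℝ :=
  (2 * (x ^ 2 + x + c) - (2 * x + 1) * (2 * x + 1)) / (x ^ 2 + x + c) ^ 2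

/-- second derivative of L -/
noncomputable def L2 (x a : ℝ) : ℝ :=
  (1 / (90 * a ^ 2 + 2)) * Q2 ((3 * a + 1) / 3) x +
    (45 * a ^ 2 / (90 * a ^ 2 + 2)) * Q2 ((15 * a - 1) / (45 * a)) x

lemma aux_L1 (a x : ℝ) (ha : 1 / 15 < a) (hx : 0 < x) :
    HasDerivAt (fun x => L x a) (L1 x a) x := by
  have hp : 0 < (3 * a + 1) / 3 := by linarith
  have hq : 0 < (15 * a - 1) / (45 * a) := div_pos (by linarith) (by linarith)
  exact ((aux_d1 _ x hp hx).const_mul _).add ((aux_d1 _ x hq hx).const_mul _)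

lemma aux_L2 (a x : ℝ) (ha : 1 / 15 < a) (hx : 0 < x) :
    HasDerivAt (fun x => L1 x a) (L2 x a) x := by
  have hp : 0 < (3 * a + 1) / 3 := by linarith
  have hq : 0 < (15 * a - 1) / (45 * a) := div_pos (by linarith) (by linarith)
  exact ((aux_d2 _ x hp hx).const_mul _).add ((aux_d2 _ x hq hx).const_mul _)

/-- the difference F(x+1) - F(x) -/
noncomputable def hh (a x : ℝ) : ℝ := 1 / (x + 1) + L x a - L (x + 1) a
noncomputable def hh1 (a x : ℝ) : ℝ := - 1 / (x + 1) ^ 2 + L1 x a - L1 (x + 1) a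
noncomputable def hh2 (a x : ℝ) : ℝ := 2 / (x + 1) ^ 3 + L2 x a - L2 (x + 1) a

lemma aux_h1 (a x : ℝ) (ha : 1 / 15 < a) (hx : 0 < x) : HasDerivAt (hh a) (hh1 a x) x := by
  have h0 : HasDerivAt (fun x : ℝ => 1 / (x + 1)) (-1 / (x + 1) ^ 2) x := by
    have := ((hasDerivAt_id x).add_const 1).inv (by simp; linarith)
    refine (this.congr_deriv ?_).congr_of_eventuallyEq ?_
    · simp
    · filter_upwards with y
      simp
  have h1 := aux_L1 a x ha hx
  have h2 := (aux_L1 a (x + 1) ha (by linarith)).comp_add_const x 1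
  exact (h0.add h1).sub h2

lemma aux_h2 (a x : ℝ) (ha : 1 / 15 < a) (hx : 0 < x) : HasDerivAt (hh1 a) (hh2 a x) x := by
  have h0 : HasDerivAt (fun x : ℝ => -1 / (x + 1) ^ 2) (2 / (x + 1) ^ 3) x := by
    have hx1 : x + 1 ≠ 0 := by linarith
    have h := (((hasDerivAt_id x).add_const 1).pow 2).inv (by simp; linarith)
    have h' := h.neg
    refine (h'.congr_deriv ?_).congr_of_eventuallyEq ?_
    · simp only [id]
      field_simp
      norm_num
      ring
    · filter_upwards with y
      simp [neg_div]
  have h1 := aux_L2 a x ha hx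
  have h2 := (aux_L2 a (x + 1) ha (by linarith)).comp_add_const x 1
  exact (h0.add h1).sub h2

/-- the polynomial governing the sign of the second derivative (v = (x+1)^2 - 1) -/
noncomputable def C5 (a : ℝ) : ℝ := (8 / 45) * a ^ 3 * (a ^ 2 + 1 / 45) * (315 * a ^ 2 - 240 * a - 7)
noncomputable def C4 (a : ℝ) : ℝ :=
  (134/91125) * a ^ 2 + (-644/6075) * a ^ 3 + (-8614/2025) * a ^ 4 + (-8614/45) * a ^ 6 + (644/3) * a ^ 7 + (134) * a ^ 8
noncomputable def C3 (a : ℝ) : ℝ :=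
  (-4/151875) * a ^ 1 + (1592/273375) * a ^ 2 + (-13204/91125) * a ^ 3 + (-9368/1215) * a ^ 4 + (-9368/27) * a ^ 6 + (13204/45) * a ^ 7 + (1592/3) * a ^ 8 + (108) * a ^ 9
noncomputable def C2 (a : ℝ) : ℝ :=
  (2/12301875) * a ^ 0 + (-1006/12301875) * a ^ 1 + (11996/1366875) * a ^ 2 + (-20896/273375) * a ^ 3 + (-128426/18225) * a ^ 4 + (-128426/405) * a ^ 6 + (20896/135) * a ^ 7 + (11996/15) * a ^ 8 + (1006/3) * a ^ 9 + (30) * a ^ 10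
noncomputable def C1 (a : ℝ) : ℝ :=
  (32/110716875) * a ^ 0 + (-616/7381125) * a ^ 1 + (4/675) * a ^ 2 + (-1468/455625) * a ^ 3 + (-295244/91125) * a ^ 4 + (-295244/2025) * a ^ 6 + (1468/225) * a ^ 7 + (540) * a ^ 8 + (3080/9) * a ^ 9 + (160/3) * a ^ 10
noncomputable def C0 (a : ℝ) : ℝ :=
  (44/332150625) * a ^ 0 + (-3134/110716875) * a ^ 1 + (412/273375) * a ^ 2 + (27284/4100625) * a ^ 3 + (-817376/1366875) * a ^ 4 + (-817376/30375) * a ^ 6 + (-27284/2025) * a ^ 7 + (412/3) * a ^ 8 + (3134/27) * a ^ 9 + (220/9) * a ^ 10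
noncomputable def NN (a v : ℝ) : ℝ :=
  C5 a * v ^ 5 + C4 a * v ^ 4 + C3 a * v ^ 3 + C2 a * v ^ 2 + C1 a * v + C0 a

lemma aux_Q2 (c x : ℝ) (hc : 0 < c) (hx : 0 < x) :
    Q2 c x - Q2 c (x + 1) = 4 * (x + 1) * ((4 * c - 1) * ((x + 1) ^ 2 + c)
      - (((x + 1) ^ 2 + c) ^ 2 - (x + 1) ^ 2)) / (((x + 1) ^ 2 + c) ^ 2 - (x + 1) ^ 2) ^ 2 := by
  have e : ((x + 1) ^ 2 + c) ^ 2 - (x + 1) ^ 2 =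
    (x ^ 2 + x + c) * ((x + 1) ^ 2 + (x + 1) + c) := by ring
  have h1 : 0 < x ^ 2 + x + c := by positivity
  have h2 : 0 < (x + 1) ^ 2 + (x + 1) + c := by positivity
  rw [e, Q2, Q2, div_sub_div _ _ (by positivity) (by positivity),
    div_eq_div_iff (by positivity) (by positivity)]
  ring

lemma aux_alg (a u m n r : ℝ) (ha : a ≠ 0) (hm : m ≠ 0) (hn : n ≠ 0) (t : ℝ) (ht : t ≠ 0) :
    2 / t ^ 3 + (1 / (90 * a ^ 2 + 2)) * (4 * t * u / m ^ 2)
      + (45 * a ^ 2 / (90 * a ^ 2 + 2)) * (4 * t * (r / a ^ 2) / (n / a ^ 2) ^ 2)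
    = 2 * ((90 * a ^ 2 + 2) * m ^ 2 * n ^ 2 + 2 * t ^ 4 * (u * n ^ 2 + 45 * a ^ 2 * (r * a ^ 2) * m ^ 2))
      / (t ^ 3 * (90 * a ^ 2 + 2) * m ^ 2 * n ^ 2) := by
  have hK : 90 * a ^ 2 + 2 ≠ 0 := by positivity
  field_simp
  ring

lemma aux_key (a x : ℝ) (ha : 1 / 15 < a) (hx : 0 < x) :
    ∃ D : ℝ, 0 < D ∧ hh2 a x = NN a ((x + 1) ^ 2 - 1) * D := by
  have hp : 0 < (3 * a + 1) / 3 := by linarith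
  have hq : 0 < (15 * a - 1) / (45 * a) := div_pos (by linarith) (by linarith)
  have ha0 : 0 < a := by linarith
  set m : ℝ := ((x + 1) ^ 2 + (3 * a + 1) / 3) ^ 2 - (x + 1) ^ 2 with hm
  set n : ℝ := (a * (x + 1) ^ 2 + (15 * a - 1) / 45) ^ 2 - a ^ 2 * (x + 1) ^ 2 with hn
  have hm0 : 0 < m := by
    have : m = (x ^ 2 + x + (3 * a + 1) / 3) * ((x + 1) ^ 2 + (x + 1) + (3 * a + 1) / 3) := by
      rw [hm]; ring
    rw [this]; positivity
  have hna : ((x + 1) ^ 2 + (15 * a - 1) / (45 * a)) ^ 2 - (x + 1) ^ 2 = n / a ^ 2 := by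
    rw [hn]; field_simp
  have hn0 : 0 < n := by
    have e : n = a ^ 2 * ((x ^ 2 + x + (15 * a - 1) / (45 * a)) *
      ((x + 1) ^ 2 + (x + 1) + (15 * a - 1) / (45 * a))) := by
      have : n = a ^ 2 * (n / a ^ 2) := by field_simp
      rw [this, ← hna]; ring
    rw [e]; positivity
  refine ⟨2 / ((x + 1) ^ 3 * (90 * a ^ 2 + 2) * m ^ 2 * n ^ 2), by positivity, ?_⟩
  have e1 := aux_Q2 _ x hp hx
  have e2 := aux_Q2 _ x hq hx
  rw [← hm] at e1
  rw [hna] at e2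
  have e3 : (4 * ((15 * a - 1) / (45 * a)) - 1) * ((x + 1) ^ 2 + (15 * a - 1) / (45 * a)) - n / a ^ 2
    = ((4 * ((15 * a - 1) / 45) - a) * (a * (x + 1) ^ 2 + (15 * a - 1) / 45) - n) / a ^ 2 := by
    field_simp
  rw [e3] at e2
  have e4 : hh2 a x = 2 / (x + 1) ^ 3
      + (1 / (90 * a ^ 2 + 2)) * (Q2 ((3 * a + 1) / 3) x - Q2 ((3 * a + 1) / 3) (x + 1))
      + (45 * a ^ 2 / (90 * a ^ 2 + 2)) *
        (Q2 ((15 * a - 1) / (45 * a)) x - Q2 ((15 * a - 1) / (45 * a)) (x + 1)) := by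
    rw [hh2, L2, L2]; ring
  rw [e4, e1, e2, aux_alg a _ m n _ ha0.ne' hm0.ne' hn0.ne' (x + 1) (by linarith)]
  have e5 : (90 * a ^ 2 + 2) * m ^ 2 * n ^ 2 + 2 * (x + 1) ^ 4 *
      (((4 * ((3 * a + 1) / 3) - 1) * ((x + 1) ^ 2 + (3 * a + 1) / 3) - m) * n ^ 2 + 45 * a ^ 2 *
        (((4 * ((15 * a - 1) / 45) - a) * (a * (x + 1) ^ 2 + (15 * a - 1) / 45) - n) * a ^ 2) * m ^ 2)
      = NN a ((x + 1) ^ 2 - 1) := by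
    obtain ⟨v, hv⟩ : ∃ v, v = (x + 1) ^ 2 - 1 := ⟨_, rfl⟩
    have hv' : (x + 1) ^ 2 = v + 1 := by rw [hv]; ring
    rw [hm, hn, show (x + 1) ^ 4 = ((x + 1) ^ 2) ^ 2 by ring, hv', NN, C5, C4, C3, C2, C1, C0]
    ring
  rw [e5]
  ring

lemma aux_pos (a v : ℝ) (ha : 79 / 100 ≤ a) (hc : 0 ≤ 315 * a ^ 2 - 240 * a - 7) (hv : 0 < v) :
    0 < NN a v := by
  obtain ⟨b, rfl⟩ : ∃ b, a = 79 / 100 + b := ⟨a - 79 / 100, by ring⟩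
  have hb : 0 ≤ b := by linarith
  have h5 : 0 ≤ C5 (79 / 100 + b) := by unfold C5; positivity
  have h4 : 0 < C4 (79 / 100 + b) := by unfold C4; ring_nf; positivity
  have h3 : 0 < C3 (79 / 100 + b) := by unfold C3; ring_nf; positivity
  have h2 : 0 < C2 (79 / 100 + b) := by unfold C2; ring_nf; positivity
  have h1 : 0 < C1 (79 / 100 + b) := by unfold C1; ring_nf; positivity
  have h0 : 0 < C0 (79 / 100 + b) := by unfold C0; ring_nf; positivity
  unfold NN
  positivity

lemma aux_neg (c5 c4 c3 c2 c1 c0 : ℝ) (h : c5 < 0) : ∃ M : ℝ, 1 ≤ M ∧ ∀ v, M < v →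
    c5 * v ^ 5 + c4 * v ^ 4 + c3 * v ^ 3 + c2 * v ^ 2 + c1 * v + c0 < 0 := by
  set S := |c4| + |c3| + |c2| + |c1| + |c0| with hS
  refine ⟨max 1 (S / (-c5)), le_max_left _ _, fun v hv => ?_⟩
  have hv1 : 1 < v := lt_of_le_of_lt (le_max_left _ _) hv
  have hv2 : S / (-c5) < v := lt_of_le_of_lt (le_max_right _ _) hv
  rw [div_lt_iff₀ (by linarith)] at hv2
  have g : ∀ (c : ℝ) (k : ℕ), k ≤ 4 → c * v ^ k ≤ |c| * v ^ 4 := by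
    intro c k hk
    have a1 : v ^ k ≤ v ^ 4 := pow_le_pow_right₀ hv1.le hk
    have a2 : 0 < v ^ k := by positivity
    calc c * v ^ k ≤ |c| * v ^ k := by gcongr; exact le_abs_self c
      _ ≤ |c| * v ^ 4 := by gcongr
  have g4 := g c4 4 (by norm_num)
  have g3 := g c3 3 (by norm_num)
  have g2 := g c2 2 (by norm_num)
  have g1 := g c1 1 (by norm_num)
  have g0 := g c0 0 (by norm_num)
  rw [pow_one] at g1
  rw [pow_zero, mul_one] at g0
  have : S * v ^ 4 + c5 * v ^ 5 < 0 := by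
    have h4 : 0 < v ^ 4 := by positivity
    have : S * v ^ 4 + c5 * v ^ 5 = (S - v * (-c5)) * v ^ 4 := by ring
    rw [this]
    exact mul_neg_of_neg_of_pos (by linarith) h4
  have e : S * v ^ 4 = |c4| * v ^ 4 + |c3| * v ^ 4 + |c2| * v ^ 4 + |c1| * v ^ 4 + |c0| * v ^ 4 := by
    rw [hS]; ring
  linarith

lemma aux_hF (a x : ℝ) (hx : 0 < x) :
    hh a x = (digamma (x + 1 + 1) - L (x + 1) a) - (digamma (x + 1) - L x a) := by
  rw [aux_rec (x + 1) (by linarith), hh]; ring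

/-- a function tending to zero whose forward differences are strictly convex is strictly concave -/
lemma aux_concave (F h : ℝ → ℝ) (hlim : Tendsto F atTop (nhds 0))
    (hF : ∀ x, 0 < x → h x = F (x + 1) - F x) (hh : StrictConvexOn ℝ (Ioi 0) h) :
    StrictConcaveOn ℝ (Ioi 0) F := by
  have hg : ∀ N : ℕ, ∀ x ∈ Ioi (0 : ℝ), ∀ y ∈ Ioi (0 : ℝ), ∀ s t : ℝ, 0 ≤ s → 0 ≤ t → s + t = 1 →
      s * (F x - F (x + N)) + t * (F y - F (y + N)) ≤
        F (s * x + t * y) - F (s * x + t * y + N) := by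
    intro N x hx y hy s t hs ht hst
    induction N with
    | zero => simp
    | succ N ih =>
      simp only [mem_Ioi] at hx hy
      have hN : (0 : ℝ) ≤ N := Nat.cast_nonneg N
      have hz : 0 < s * x + t * y := by
        have := (convex_Ioi (0 : ℝ)) hx hy hs ht hst
        simpa using this
      have hc := hh.convexOn.2 (x := x + N) (y := y + N) (by simp only [mem_Ioi]; linarith)
        (by simp only [mem_Ioi]; linarith) hs ht hst
      simp only [smul_eq_mul] at hc
      rw [show s * (x + N) + t * (y + N) = s * x + t * y + (s + t) * N by ring, hst, one_mul,
        hF _ (by linarith), hF _ (by linarith), hF _ (by linarith)] at hc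
      push_cast
      rw [← add_assoc, ← add_assoc, ← add_assoc]
      linarith
  have hconc : ∀ x ∈ Ioi (0 : ℝ), ∀ y ∈ Ioi (0 : ℝ), ∀ s t : ℝ, 0 ≤ s → 0 ≤ t → s + t = 1 →
      s * F x + t * F y ≤ F (s * x + t * y) := by
    intro x hx y hy s t hs ht hst
    have hl : ∀ z : ℝ, Tendsto (fun N : ℕ => F z - F (z + N)) atTop (nhds (F z)) := by
      intro z
      have h1 : Tendsto (fun N : ℕ => z + (N : ℝ)) atTop atTop :=
        tendsto_atTop_add_const_left _ _ tendsto_natCast_atTop_atTop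
      have := (hlim.comp h1).const_sub (F z)
      simpa using this
    exact le_of_tendsto_of_tendsto' (((hl x).const_mul s).add ((hl y).const_mul t))
      (hl (s * x + t * y)) (fun N => hg N x hx y hy s t hs ht hst)
  refine ⟨convex_Ioi 0, ?_⟩
  intro x hx y hy hxy s t hs ht hst
  have hc := hh.2 hx hy hxy hs ht hst
  simp only [mem_Ioi] at hx hy
  have hz : 0 < s * x + t * y := by positivity
  have h1 := hconc (x + 1) (by simp only [mem_Ioi]; linarith) (y + 1)
    (by simp only [mem_Ioi]; linarith) s t hs.le ht.le hst
  rw [show s * (x + 1) + t * (y + 1) = s * x + t * y + (s + t) by ring, hst] at h1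
  simp only [smul_eq_mul] at hc ⊢
  rw [hF _ hx, hF _ hy, hF _ hz] at hc
  linarith

/-- For a > 1/15, F_a(x) = ψ(x+1) − L(x,a) is strictly increasing and strictly concave on
(0, ∞) if and only if a ≥ a₁ = (40 + 3√205)/105. -/
theorem stmt_7 (a : ℝ) (ha : 1 / 15 < a) :
    (StrictMonoOn (fun x : ℝ => digamma (x + 1) - L x a) (Set.Ioi 0) ∧
        StrictConcaveOn ℝ (Set.Ioi 0) (fun x : ℝ => digamma (x + 1) - L x a)) ↔
      (40 + 3 * Real.sqrt 205) / 105 ≤ a := by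
  have hs0 : 0 ≤ Real.sqrt 205 := Real.sqrt_nonneg _
  have hs2 : Real.sqrt 205 ^ 2 = 205 := Real.sq_sqrt (by norm_num)
  have hlim := aux_lim a ha
  constructor
  · rintro ⟨hmono, -⟩
    by_contra! hlt
    have hq : 315 * a ^ 2 - 240 * a - 7 < 0 := by
      have h1 : 0 < 40 + 3 * Real.sqrt 205 - 105 * a := by linarith
      have h2 : 0 < 105 * a - 40 + 3 * Real.sqrt 205 := by nlinarith
      nlinarith [mul_pos h1 h2]
    have h5 : C5 a < 0 := by
      have ha0 : 0 < a := by linarith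
      unfold C5
      exact mul_neg_of_pos_of_neg (by positivity) hq
    obtain ⟨M, hM1, hM⟩ := aux_neg (C5 a) (C4 a) (C3 a) (C2 a) (C1 a) (C0 a) h5
    have hconv : StrictConvexOn ℝ (Ioi M) (fun x => - hh a x) := by
      apply aux_conv _ (fun x => - hh1 a x) (fun x => - hh2 a x)
      · intro x hx
        exact (aux_h1 a x ha (by linarith)).fun_neg
      · intro x hx
        exact (aux_h2 a x ha (by linarith)).fun_neg
      · intro x hx
        obtain ⟨D, hD, e⟩ := aux_key a x ha (by linarith)
        have := hM ((x + 1) ^ 2 - 1) (by nlinarith)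
        have h3 : NN a ((x + 1) ^ 2 - 1) < 0 := this
        rw [e]
        have := mul_neg_of_neg_of_pos h3 hD
        linarith
    have hconc : StrictConcaveOn ℝ (Ioi M) (hh a) := by
      have := hconv.neg
      simpa [Pi.neg_def] using this
    have hlh : Tendsto (hh a) atTop (nhds 0) := by
      have h1 : Tendsto (fun x : ℝ => x + 1) atTop atTop :=
        tendsto_atTop_add_const_right _ _ tendsto_id
      have h2 := (hlim.comp h1).sub hlim
      simp only [sub_zero] at h2
      refine h2.congr' ?_
      filter_upwards [eventually_gt_atTop 0] with x hx
      rw [aux_hF a x hx]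
      rfl
    have hm := aux_mono (hh a) M 0 hconc hlh
    have hneg : hh a (M + 1) < 0 := by
      have h1 : hh a (M + 1) < hh a (M + 2) :=
        hm (by simp) (by simp) (by linarith)
      have h2 : hh a (M + 2) ≤ 0 := by
        apply ge_of_tendsto hlh
        filter_upwards [eventually_gt_atTop (M + 2)] with x hx
        exact (hm (by simp) (by simp only [mem_Ioi]; linarith) hx).le
      linarith
    have h3 := hmono (a := M + 1) (b := M + 1 + 1) (by simp only [mem_Ioi]; linarith)
      (by simp only [mem_Ioi]; linarith) (by linarith)
    simp only at h3
    rw [aux_hF a _ (by linarith)] at hneg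
    linarith
  · intro hle
    have ha79 : 79 / 100 ≤ a := by
      have : (143170 / 10000 : ℝ) ≤ Real.sqrt 205 := by
        apply Real.le_sqrt_of_sq_le; norm_num
      linarith
    have hq : 0 ≤ 315 * a ^ 2 - 240 * a - 7 := by
      have h1 : 0 ≤ 105 * a - 40 - 3 * Real.sqrt 205 := by linarith
      have h2 : 0 ≤ 105 * a - 40 + 3 * Real.sqrt 205 := by linarith
      nlinarith [mul_nonneg h1 h2]
    have hconv : StrictConvexOn ℝ (Ioi 0) (hh a) := by
      apply aux_conv _ (hh1 a) (hh2 a)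
      · exact fun x hx => aux_h1 a x ha hx
      · exact fun x hx => aux_h2 a x ha hx
      · intro x hx
        obtain ⟨D, hD, e⟩ := aux_key a x ha hx
        rw [e]
        exact mul_pos (aux_pos a _ ha79 hq (by nlinarith)) hD
    have hconc := aux_concave (fun x : ℝ => digamma (x + 1) - L x a) (hh a) hlim
      (fun x hx => aux_hF a x hx) hconv
    exact ⟨aux_mono _ 0 0 hconc hlim, hconc⟩
end

section
/- The equation ψ''(1) + (3/2)·(2025a⁴ + 1620a³ + 360a² − 36a + 1)/((3a+1)²(15a−1)²) = 0 has a unique root a₀'' in the interval (1/15, ∞) (numerically a₀'' ≈ 0.4321803644583305, and a₀'' ∈ (1/3, 1/2)); moreover, for a > 1/15, the function F_a is convex on (0, ∞) if and only if a ∈ (1/15, a₀'']. -/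
open Real Filter Set

namespace Stmt9

/-- Weight sequence used for the Weierstrass test. -/
lemma summable_wt : Summable (fun m : ℕ => 1 / ((m : ℝ) + 1) ^ 2) := by
  have h := (Real.summable_one_div_nat_pow (p := 2)).2 (by norm_num)
  have h2 := (summable_nat_add_iff 1).2 h
  refine h2.congr (fun m => ?_)
  push_cast
  rfl

lemma half_le {x : ℝ} (hx : 1 / 2 < x) (m : ℕ) : ((m : ℝ) + 1) / 2 ≤ x + m := by
  have : (0 : ℝ) ≤ m := Nat.cast_nonneg m
  linarith

lemma pos_of {x : ℝ} (hx : 1 / 2 < x) (m : ℕ) : 0 < x + m := by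
  have : (0 : ℝ) ≤ m := Nat.cast_nonneg m
  linarith

lemma bound1 {x b : ℝ} (hx : 1 / 2 < x) (hb : x < b) (m : ℕ) :
    ‖1 / ((m : ℝ) + 1) - 1 / (x + m)‖ ≤ 2 * (b + 1) * (1 / ((m : ℝ) + 1) ^ 2) := by
  have h0 : (0 : ℝ) ≤ m := Nat.cast_nonneg m
  have h1 := pos_of hx m
  have h2 := half_le hx m
  have e : 1 / ((m : ℝ) + 1) - 1 / (x + m) = (x - 1) / (((m : ℝ) + 1) * (x + m)) := by
    field_simp
    ring
  rw [e, Real.norm_eq_abs, abs_div, abs_of_pos (by positivity : 0 < ((m : ℝ) + 1) * (x + m))]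
  have h3 : |x - 1| ≤ b + 1 := by
    rw [abs_le]; constructor <;> linarith
  have e2 : 2 * (b + 1) * (1 / ((m : ℝ) + 1) ^ 2) = (b + 1) / (((m : ℝ) + 1) * (((m : ℝ) + 1) / 2)) := by
    field_simp
  rw [e2]
  have : 0 < b + 1 := by linarith
  gcongr

lemma bound2 {x : ℝ} (hx : 1 / 2 < x) (m : ℕ) :
    ‖1 / (x + m) ^ 2‖ ≤ 4 * (1 / ((m : ℝ) + 1) ^ 2) := by
  have h0 : (0 : ℝ) ≤ m := Nat.cast_nonneg m
  have h1 := pos_of hx m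
  have h2 := half_le hx m
  rw [Real.norm_eq_abs, abs_of_pos (by positivity)]
  have e2 : 4 * (1 / ((m : ℝ) + 1) ^ 2) = 1 / (((m : ℝ) + 1) / 2) ^ 2 := by
    field_simp; norm_num
  rw [e2]
  gcongr

lemma bound3 {x : ℝ} (hx : 1 / 2 < x) (m : ℕ) :
    ‖-2 / (x + m) ^ 3‖ ≤ 16 * (1 / ((m : ℝ) + 1) ^ 2) := by
  have h0 : (0 : ℝ) ≤ m := Nat.cast_nonneg m
  have h1 := pos_of hx m
  have h2 := half_le hx m
  rw [neg_div, norm_neg, Real.norm_eq_abs, abs_of_pos (by positivity)]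
  have e2 : 16 * (1 / ((m : ℝ) + 1) ^ 2) = 2 / ((1 / 2) * (((m : ℝ) + 1) / 2) ^ 2) := by
    field_simp; norm_num
  rw [e2]
  have : (1 / 2) * (((m : ℝ) + 1) / 2) ^ 2 ≤ (x + m) ^ 3 := by
    calc (1 / 2) * (((m : ℝ) + 1) / 2) ^ 2 ≤ (x + m) * (x + m) ^ 2 := by
          gcongr
          linarith
      _ = _ := by ring
  gcongr

/-- Series for the second derivative of the digamma function. -/
noncomputable def psi2 (x : ℝ) : ℝ := ∑' m : ℕ, -2 / (x + m) ^ 3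

/-- Series for the first derivative of the digamma function. -/
noncomputable def psi1 (x : ℝ) : ℝ := ∑' m : ℕ, 1 / (x + m) ^ 2

/-- Series for the digamma function. -/
noncomputable def psi0 (x : ℝ) : ℝ :=
  -Real.eulerMascheroniConstant + ∑' m : ℕ, (1 / ((m : ℝ) + 1) - 1 / (x + m))

lemma summable3 {x : ℝ} (hx : 1 / 2 < x) : Summable (fun m : ℕ => -2 / (x + m) ^ 3) :=
  Summable.of_norm_bounded (summable_wt.mul_left 16) (fun m => bound3 hx m)

lemma continuousOn_psi2 : ContinuousOn psi2 (Ioi (1 / 2)) := by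
  refine continuousOn_tsum (fun m => ?_) (summable_wt.mul_left 16) (fun m x hx => bound3 hx m)
  refine ContinuousOn.div continuousOn_const (by fun_prop) (fun x hx => ?_)
  exact pow_ne_zero _ (pos_of hx m).ne'

lemma hasDerivAt_psi1 {x : ℝ} (hx : 1 / 2 < x) : HasDerivAt psi1 (psi2 x) x := by
  refine hasDerivAt_tsum_of_isPreconnected (g := fun (m : ℕ) (z : ℝ) => 1 / (z + m) ^ 2)
    (g' := fun (m : ℕ) (z : ℝ) => -2 / (z + m) ^ 3) (t := Ioi (1 / 2)) (y₀ := 1) (summable_wt.mul_left 16)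
    isOpen_Ioi isPreconnected_Ioi (fun m y hy => ?_) (fun m y hy => bound3 hy m)
    (by norm_num) ?_ hx
  · have h := pos_of hy m
    have := (((hasDerivAt_id' y).add_const (m : ℝ)).fun_pow 2).fun_inv (pow_ne_zero 2 h.ne')
    simp only [one_div]
    refine this.congr_deriv ?_
    simp
    field_simp
  · exact Summable.of_norm_bounded (summable_wt.mul_left 4) (fun m => bound2 (by norm_num) m)

lemma hasDerivAt_psi0 {x : ℝ} (hx : 1 / 2 < x) : HasDerivAt psi0 (psi1 x) x := by
  refine HasDerivAt.const_add _ ?_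
  refine hasDerivAt_tsum_of_isPreconnected (g := fun (m : ℕ) (z : ℝ) => 1 / ((m : ℝ) + 1) - 1 / (z + m))
    (g' := fun (m : ℕ) (z : ℝ) => 1 / (z + m) ^ 2) (t := Ioi (1 / 2)) (y₀ := 1) (summable_wt.mul_left 4)
    isOpen_Ioi isPreconnected_Ioi (fun m y hy => ?_) (fun m y hy => bound2 hy m)
    (by norm_num) ?_ hx
  · have h := pos_of hy m
    have := (((hasDerivAt_id y).add_const (m : ℝ)).inv (by simpa using h.ne')).const_sub
      (1 / ((m : ℝ) + 1))
    convert this using 1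
    · ext z; simp
    · simp
      field_simp
  · exact Summable.of_norm_bounded (summable_wt.mul_left (2 * (2 + 1)))
      (fun m => bound1 (b := 2) (by norm_num) (by norm_num) m)

lemma tendsto_const : Tendsto (fun n : ℕ => Real.log n - (harmonic (n + 1) : ℝ)) atTop
    (nhds (-Real.eulerMascheroniConstant)) := by
  have h1 := Real.tendsto_harmonic_sub_log
  have h2 : Tendsto (fun n : ℕ => 1 / ((n : ℝ) + 1)) atTop (nhds 0) :=
    tendsto_one_div_add_atTop_nhds_zero_nat
  have h3 := (h1.add h2).neg
  rw [add_zero] at h3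
  refine h3.congr (fun n => ?_)
  rw [harmonic_succ]
  push_cast
  rw [one_div]
  ring

lemma digamma_eq {x : ℝ} (hx : 1 / 2 < x) : digamma x = psi0 x := by
  have key : HasDerivAt (fun y : ℝ => Real.log (Real.Gamma y)) (psi0 x) x := by
    have hs : IsOpen (Ioo (1 / 2 : ℝ) (x + 1)) := isOpen_Ioo
    have hU := (tendstoUniformlyOn_tsum_nat
      (f := fun (m : ℕ) (y : ℝ) => 1 / ((m : ℝ) + 1) - 1 / (y + m))
      (summable_wt.mul_left (2 * (x + 1 + 1))) (s := Ioo (1 / 2 : ℝ) (x + 1))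
      (fun m y hy => bound1 hy.1 hy.2 m))
    have hU2 : TendstoUniformlyOn (fun (n : ℕ) (y : ℝ) =>
        ∑ m ∈ Finset.range (n + 1), (1 / ((m : ℝ) + 1) - 1 / (y + m)))
        (fun y => ∑' m : ℕ, (1 / ((m : ℝ) + 1) - 1 / (y + m))) atTop (Ioo (1 / 2 : ℝ) (x + 1)) :=
      fun u hu => (tendsto_add_atTop_nat 1).eventually (hU u hu)
    have hC : TendstoUniformlyOn (fun (n : ℕ) (_ : ℝ) => Real.log n - (harmonic (n + 1) : ℝ))
        (fun _ => -Real.eulerMascheroniConstant) atTop (Ioo (1 / 2 : ℝ) (x + 1)) := by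
      exact tendsto_const.tendstoUniformlyOn_const _
    have hS := hC.add hU2
    refine hasDerivAt_of_tendstoUniformlyOn (l := atTop)
      (f := fun (n : ℕ) (y : ℝ) => Real.BohrMollerup.logGammaSeq y n) hs hS ?_ ?_ ?_
    · refine Filter.Eventually.of_forall (fun n y hy => ?_)
      have hd : HasDerivAt (fun y : ℝ => y * Real.log n + Real.log (n.factorial) -
          ∑ m ∈ Finset.range (n + 1), Real.log (y + m))
          (1 * Real.log n - ∑ m ∈ Finset.range (n + 1), 1 / (y + m)) y := by
        refine HasDerivAt.sub (((hasDerivAt_id y).mul_const _).add_const _) ?_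
        refine HasDerivAt.fun_sum (fun m _ => ?_)
        exact ((hasDerivAt_id y).add_const (m : ℝ)).log (pos_of hy.1 m).ne'
      refine HasDerivAt.congr_deriv hd ?_
      simp only [Pi.add_apply]
      simp only [Finset.sum_sub_distrib, harmonic]
      push_cast
      simp only [one_div]
      ring
    · intro y hy
      exact Real.BohrMollerup.tendsto_log_gamma (by linarith [hy.1])
    · exact ⟨hx, by linarith⟩
  exact key.deriv

lemma hasDerivAt_digamma {x : ℝ} (hx : 1 / 2 < x) : HasDerivAt digamma (psi1 x) x := by
  refine (hasDerivAt_psi0 hx).congr_of_eventuallyEq ?_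
  filter_upwards [Ioi_mem_nhds hx] with y hy using digamma_eq hy

lemma iteratedDeriv_digamma {x : ℝ} (hx : 1 / 2 < x) : iteratedDeriv 2 digamma x = psi2 x := by
  rw [iteratedDeriv_succ, iteratedDeriv_one]
  refine HasDerivAt.deriv ?_
  refine (hasDerivAt_psi1 hx).congr_of_eventuallyEq ?_
  filter_upwards [Ioi_mem_nhds hx] with y hy using (hasDerivAt_digamma hy).deriv

/-- The denominator, in the variables `m = x² + x + 1/3` and `t = a - 1/(45a)`. -/
noncomputable def Df (m t : ℝ) : ℝ := m ^ 2 + t * m - 1 / 45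

/-- The second `x`-derivative of `L`, in the variables `m` and `t`. -/
noncomputable def Mf (m t : ℝ) : ℝ :=
  ((m + t) * Df m t - (2 * m - 1 / 6) * ((m + t) ^ 2 + 1 / 45)) / Df m t ^ 2

lemma Df_pos {m t : ℝ} (hm : 1 / 3 ≤ m) (ht : -4 / 15 < t) : 0 < Df m t := by
  unfold Df
  nlinarith [mul_nonneg (sub_nonneg.2 hm) (by linarith : (0 : ℝ) ≤ m + t)]

lemma Mf_strictMono {m t₁ t₂ : ℝ} (hm : 1 / 3 ≤ m) (h₁ : -4 / 15 < t₁) (h : t₁ < t₂) :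
    Mf m t₁ < Mf m t₂ := by
  have d1 := Df_pos hm h₁
  have d2 := Df_pos hm (h₁.trans h)
  have key : ∀ t, -4 / 15 < t → Df m t < 2 * (2 * m - 1 / 6) * (2 * m + t) := by
    intro t ht
    unfold Df
    nlinarith [mul_nonneg (sub_nonneg.2 hm) (by linarith : (0 : ℝ) ≤ t + 4 / 15)]
  have k1 := key t₁ h₁
  have k2 := key t₂ (h₁.trans h)
  have e : Mf m t₂ - Mf m t₁ = (t₂ - t₁) / 45 *
      ((2 * m - 1 / 6) * (2 * m + t₁) * Df m t₂ + (2 * m - 1 / 6) * (2 * m + t₂) * Df m t₁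
        - Df m t₁ * Df m t₂) / (Df m t₁ ^ 2 * Df m t₂ ^ 2) := by
    unfold Mf
    rw [div_sub_div _ _ (by positivity) (by positivity), div_eq_div_iff (by positivity) (by positivity)]
    unfold Df
    ring
  have : 0 < Mf m t₂ - Mf m t₁ := by
    rw [e]
    have h3 : 0 < t₂ - t₁ := by linarith
    have h4 : 0 < (2 * m - 1 / 6) * (2 * m + t₁) * Df m t₂ + (2 * m - 1 / 6) * (2 * m + t₂) * Df m t₁
        - Df m t₁ * Df m t₂ := by nlinarith
    positivity
  linarith

lemma Mf_nonpos {m t : ℝ} (hm : 1 / 3 ≤ m) (ht : 0 ≤ t) : Mf m t ≤ 0 := by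
  unfold Mf
  refine div_nonpos_of_nonpos_of_nonneg ?_ (by positivity)
  have h1 : 0 ≤ m + t := by linarith
  unfold Df
  nlinarith [mul_nonneg (sub_nonneg.2 hm) (sq_nonneg (m + t)), sq_nonneg (m + t)]

/-- `m` as a function of `x`. -/
noncomputable def mf (x : ℝ) : ℝ := x ^ 2 + x + 1 / 3

lemma mf_ge {x : ℝ} (hx : 0 ≤ x) : 1 / 3 ≤ mf x := by
  unfold mf
  nlinarith

lemma mf_zero : mf 0 = 1 / 3 := by norm_num [mf]

lemma tele {t x : ℝ} (ht : 0 ≤ t) (hx : 0 ≤ x)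
    (h : ∀ y, x ≤ y → 2 / (y + 1) ^ 3 ≤ Mf (mf (y + 1)) t - Mf (mf y) t) :
    Mf (mf x) t ≤ psi2 (x + 1) := by
  have hs := summable3 (x := x + 1) (by linarith)
  have hN : ∀ N : ℕ, Mf (mf x) t - Mf (mf (x + N)) t ≤
      ∑ m ∈ Finset.range N, -2 / (x + 1 + m) ^ 3 := by
    intro N
    induction N with
    | zero => simp
    | succ N ih =>
      rw [Finset.sum_range_succ]
      have h0 : (0 : ℝ) ≤ N := Nat.cast_nonneg N
      have h1 := h (x + N) (by linarith)
      have e : x + (N : ℝ) + 1 = x + 1 + N := by ring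
      have e2 : x + ((N + 1 : ℕ) : ℝ) = x + 1 + N := by push_cast; ring
      rw [e] at h1
      rw [e2, neg_div]
      linarith
  refine ge_of_tendsto' hs.hasSum.tendsto_sum_nat (fun N => ?_)
  refine le_trans ?_ (hN N)
  have h0 : (0 : ℝ) ≤ N := Nat.cast_nonneg N
  have := Mf_nonpos (mf_ge (x := x + N) (by linarith)) ht
  linarith

lemma step_lo {y : ℝ} (hy : 0 ≤ y) :
    2 / (y + 1) ^ 3 ≤ Mf (mf (y + 1)) (3 / 8) - Mf (mf y) (3 / 8) := by
  have d1 := Df_pos (mf_ge hy) (by norm_num : (-4 / 15 : ℝ) < 3 / 8)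
  have d2 := Df_pos (mf_ge (x := y + 1) (by linarith)) (by norm_num : (-4 / 15 : ℝ) < 3 / 8)
  unfold Mf
  rw [div_sub_div _ _ (by positivity) (by positivity), div_le_div_iff₀ (by positivity) (by positivity),
    ← sub_nonneg]
  unfold Df mf
  ring_nf
  positivity

lemma step_hi {y : ℝ} (hy : 1 / 16 ≤ y) :
    2 / (y + 1) ^ 3 ≤ Mf (mf (y + 1)) (2 / 5) - Mf (mf y) (2 / 5) := by
  have d1 := Df_pos (mf_ge (x := y) (by linarith)) (by norm_num : (-4 / 15 : ℝ) < 2 / 5)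
  have d2 := Df_pos (mf_ge (x := y + 1) (by linarith)) (by norm_num : (-4 / 15 : ℝ) < 2 / 5)
  unfold Mf
  rw [div_sub_div _ _ (by positivity) (by positivity), div_le_div_iff₀ (by positivity) (by positivity),
    ← sub_nonneg]
  unfold Df mf
  obtain ⟨z, hz, rfl⟩ : ∃ z : ℝ, 0 ≤ z ∧ y = z + 1 / 16 := ⟨y - 1 / 16, by linarith, by ring⟩
  ring_nf
  positivity

lemma near_alg {n t : ℝ} (hn : 0 ≤ n) (hn' : n ≤ 1 / 15) (ht : 3 / 8 ≤ t) (ht' : t ≤ 2 / 5) :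
    Mf (n + 1 / 3) t - Mf (1 / 3) t ≤ n * (121 / 20 - 11 * n) := by
  have d1 := Df_pos (m := n + 1 / 3) (t := t) (by linarith) (by linarith)
  have d2 := Df_pos (m := 1 / 3) (t := t) (by linarith) (by linarith)
  unfold Mf
  rw [div_sub_div _ _ (by positivity) (by positivity), div_le_iff₀ (by positivity), ← sub_nonneg]
  unfold Df
  obtain ⟨s, hs, rfl⟩ : ∃ s : ℝ, 0 ≤ s ∧ t = s + 3 / 8 := ⟨t - 3 / 8, by linarith, by ring⟩
  have hs' : s ≤ 1 / 40 := by linarith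
  have hp : ∀ i j : ℕ, 0 ≤ n ^ i * s ^ j := fun i j => by positivity
  have hq : ∀ i j : ℕ, n ^ (i + 1) * s ^ j ≤ n * ((1 / 15) ^ i * (1 / 40) ^ j) := fun i j => by
    rw [pow_succ', mul_assoc]
    gcongr
  have hW : 0 ≤ (80549161 / 335923200000) * (n ^ 0 * s ^ 0) +
      (24228293 / 699840000) * (n ^ 0 * s ^ 1) +
      (510769 / 3888000) * (n ^ 0 * s ^ 2) +
      (8237 / 48600) * (n ^ 0 * s ^ 3) +
      (121 / 1620) * (n ^ 0 * s ^ 4) +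
      (94305199 / 16796160000) * (n ^ 1 * s ^ 0) +
      (30469423 / 174960000) * (n ^ 1 * s ^ 1) +
      (490643 / 972000) * (n ^ 1 * s ^ 2) +
      (5911 / 12150) * (n ^ 1 * s ^ 3) +
      (59 / 405) * (n ^ 1 * s ^ 4) +
      (225621239 / 22394880000) * (n ^ 2 * s ^ 0) +
      (8679223 / 46656000) * (n ^ 2 * s ^ 1) +
      (353827 / 1296000) * (n ^ 2 * s ^ 2) +
      (-637 / 16200) * (n ^ 2 * s ^ 3) +
      (-77 / 540) * (n ^ 2 * s ^ 4) +
      (-110170883 / 373248000) * (n ^ 3 * s ^ 0) +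
      (-3235469 / 1944000) * (n ^ 3 * s ^ 1) +
      (-26687 / 7200) * (n ^ 3 * s ^ 2) +
      (-484 / 135) * (n ^ 3 * s ^ 3) +
      (-11 / 9) * (n ^ 3 * s ^ 4) +
      (-1500037 / 1944000) * (n ^ 4 * s ^ 0) +
      (-24563 / 7200) * (n ^ 4 * s ^ 1) +
      (-451 / 90) * (n ^ 4 * s ^ 2) +
      (-22 / 9) * (n ^ 4 * s ^ 3) +
      (-65219 / 129600) * (n ^ 5 * s ^ 0) +
      (-847 / 540) * (n ^ 5 * s ^ 1) +
      (-11 / 9) * (n ^ 5 * s ^ 2) := by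
    linarith [hp 2 0, hp 2 1, hp 2 2, hp 1 0, hp 1 1, hp 1 2, hp 1 3, hp 0 0, hp 0 1, hp 0 2, hp 0 3, hp 1 4, hp 0 4,
      hq 3 0, hq 3 1, hq 3 2, hq 2 0, hq 2 1, hq 2 2, hq 2 3, hq 1 3, hq 1 4, hq 4 0, hq 4 1, hq 4 2, hq 3 3, hq 2 4]
  refine le_of_le_of_eq (mul_nonneg hn hW) ?_
  ring

lemma near_x {x : ℝ} (hx : 0 ≤ x) (hx' : x ≤ 1 / 16) :
    (x ^ 2 + x) * (121 / 20 - 11 * (x ^ 2 + x)) ≤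
      2 + 1 / 4 + 2 / 27 - 2 / (x + 1) ^ 3 - 2 / (x + 2) ^ 3 - 2 / (x + 3) ^ 3 := by
  rw [← sub_nonneg]
  have e : 2 + 1 / 4 + 2 / 27 - 2 / (x + 1) ^ 3 - 2 / (x + 2) ^ 3 - 2 / (x + 3) ^ 3 -
      (x ^ 2 + x) * (121 / 20 - 11 * (x ^ 2 + x)) =
      ((2 + 1 / 4 + 2 / 27 - (x ^ 2 + x) * (121 / 20 - 11 * (x ^ 2 + x))) *
        ((x + 1) ^ 3 * (x + 2) ^ 3 * (x + 3) ^ 3) -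
        2 * ((x + 2) ^ 3 * (x + 3) ^ 3 + (x + 1) ^ 3 * (x + 3) ^ 3 + (x + 1) ^ 3 * (x + 2) ^ 3)) /
        ((x + 1) ^ 3 * (x + 2) ^ 3 * (x + 3) ^ 3) := by
    field_simp
    ring
  rw [e]
  refine div_nonneg ?_ (by positivity)
  have h1 : 0 ≤ x * (1 / 16 - x) := mul_nonneg hx (by linarith)
  have hp : ∀ k : ℕ, 0 ≤ x ^ k := fun k => pow_nonneg hx k
  nlinarith [hp 1, hp 3, hp 4, hp 5, hp 6, hp 7, hp 8, hp 9, hp 10, hp 11, hp 12, hp 13]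

lemma psi2_near {x : ℝ} (hx : 0 ≤ x) :
    2 + 1 / 4 + 2 / 27 - 2 / (x + 1) ^ 3 - 2 / (x + 2) ^ 3 - 2 / (x + 3) ^ 3 ≤
      psi2 (x + 1) - psi2 1 := by
  have hs := summable3 (x := x + 1) (by linarith)
  have hs1 := summable3 (x := 1) (by norm_num)
  have e : psi2 (x + 1) - psi2 1 = ∑' m : ℕ, (-2 / (x + 1 + m) ^ 3 - -2 / (1 + (m : ℝ)) ^ 3) :=
    (hs.tsum_sub hs1).symm
  rw [e]
  have := (hs.sub hs1).sum_le_tsum (Finset.range 3) (fun m _ => by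
    have h0 : (0 : ℝ) ≤ m := Nat.cast_nonneg m
    have : 2 / (x + 1 + m) ^ 3 ≤ 2 / (1 + (m : ℝ)) ^ 3 := by
      gcongr
      linarith
    rw [neg_div, neg_div]
    linarith)
  refine le_trans (le_of_eq ?_) this
  simp [Finset.sum_range_succ]
  have e1 : x + 1 + 1 = x + 2 := by ring
  have e2 : x + 1 + 2 = x + 3 := by ring
  rw [e1, e2]
  norm_num
  ring

lemma psi2_one_lt : psi2 1 < Mf (1 / 3) (2 / 5) := by
  have hs1 := summable3 (x := 1) (by norm_num)
  have := hs1.neg.sum_le_tsum (Finset.range 6) (fun m _ => by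
    rw [neg_div, neg_neg]
    positivity)
  rw [tsum_neg] at this
  change _ ≤ - psi2 1 at this
  norm_num [Finset.sum_range_succ] at this
  norm_num [Mf, Df]
  linarith

lemma psi2_one_ge : Mf (1 / 3) (3 / 8) ≤ psi2 1 := by
  have := tele (t := 3 / 8) (x := 0) (by norm_num) le_rfl (fun y hy => step_lo hy)
  simpa [mf_zero] using this

lemma main_ineq {t : ℝ} (ht : 3 / 8 ≤ t) (ht' : t ≤ 2 / 5) (h0 : psi2 1 = Mf (1 / 3) t)
    {x : ℝ} (hx : 0 ≤ x) : Mf (mf x) t ≤ psi2 (x + 1) := by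
  rcases le_total x (1 / 16) with h | h
  · have h1 := near_alg (n := x ^ 2 + x) (t := t) (by positivity) (by nlinarith) ht ht'
    have h2 := near_x hx h
    have h3 := psi2_near hx
    unfold mf
    linarith
  · have h1 := tele (t := 2 / 5) (x := x) (by norm_num) hx (fun y hy => step_hi (h.trans hy))
    rcases ht'.eq_or_lt with rfl | h2
    · exact h1
    · exact (Mf_strictMono (mf_ge hx) (by linarith) h2).le.trans h1

/-- The parameter `t` as a function of `a`. -/
noncomputable def tf (a : ℝ) : ℝ := a - 1 / (45 * a)

lemma tf_strictMono {a b : ℝ} (ha : 0 < a) (h : a < b) : tf a < tf b := by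
  unfold tf
  have : 1 / (45 * b) < 1 / (45 * a) := by gcongr
  linarith

lemma tf_gt {a : ℝ} (ha : 1 / 15 < a) : -4 / 15 < tf a := by
  have := tf_strictMono (by norm_num) ha
  norm_num [tf] at this ⊢
  linarith

/-- The first `x`-derivative of `L`. -/
noncomputable def L1 (t x : ℝ) : ℝ := (x + 1 / 2) * (mf x + t) / Df (mf x) t

lemma hasDerivAt_mf (x : ℝ) : HasDerivAt mf (2 * x + 1) x := by
  have := (((hasDerivAt_id' x).fun_pow 2).fun_add (hasDerivAt_id' x)).add_const (1 / 3 : ℝ)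
  refine HasDerivAt.congr_deriv this ?_
  simp

lemma hasDerivAt_L {a x : ℝ} (ha : 1 / 15 < a) (hx : 0 < x) :
    HasDerivAt (fun y => L y a) (L1 (tf a) x) x := by
  have ha0 : 0 < a := by linarith
  have hq : 0 < (15 * a - 1) / (45 * a) := div_pos (by linarith) (by linarith)
  have hQ : 0 < x ^ 2 + x + (15 * a - 1) / (45 * a) := by positivity
  have hP : 0 < x ^ 2 + x + (3 * a + 1) / 3 := by positivity
  have hd : ∀ c : ℝ, HasDerivAt (fun y : ℝ => y ^ 2 + y + c) (2 * x + 1) x := by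
    intro c
    have := (((hasDerivAt_id' x).fun_pow 2).fun_add (hasDerivAt_id' x)).add_const c
    refine HasDerivAt.congr_deriv this ?_
    simp
  have h := (((hd ((3 * a + 1) / 3)).log hP.ne').const_mul (1 / (90 * a ^ 2 + 2))).fun_add
    (((hd ((15 * a - 1) / (45 * a))).log hQ.ne').const_mul (45 * a ^ 2 / (90 * a ^ 2 + 2)))
  refine HasDerivAt.congr_deriv h ?_
  have hD : Df (mf x) (tf a) =
      (x ^ 2 + x + (3 * a + 1) / 3) * (x ^ 2 + x + (15 * a - 1) / (45 * a)) := by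
    unfold Df mf tf
    field_simp
    ring
  unfold L1
  rw [hD]
  have hs : 0 < 90 * a ^ 2 + 2 := by positivity
  have hm : mf x + tf a = 2 / (90 * a ^ 2 + 2) * (x ^ 2 + x + (15 * a - 1) / (45 * a)) +
      90 * a ^ 2 / (90 * a ^ 2 + 2) * (x ^ 2 + x + (3 * a + 1) / 3) := by
    unfold mf tf
    field_simp
    ring
  rw [hm]
  generalize x ^ 2 + x + (15 * a - 1) / (45 * a) = q at hQ ⊢
  generalize x ^ 2 + x + (3 * a + 1) / 3 = p at hP ⊢
  field_simp
  ring

lemma hasDerivAt_L1 {t x : ℝ} (ht : -4 / 15 < t) (hx : 0 ≤ x) :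
    HasDerivAt (L1 t) (Mf (mf x) t) x := by
  have hD := Df_pos (mf_ge hx) ht
  have hm := hasDerivAt_mf x
  have h1 := ((hasDerivAt_id' x).add_const (1 / 2 : ℝ)).fun_mul (hm.add_const t)
  have h2 : HasDerivAt (fun y => Df (mf y) t) (2 * mf x * (2 * x + 1) + t * (2 * x + 1)) x := by
    have := ((hm.fun_pow 2).fun_add (hm.const_mul t)).sub_const (1 / 45)
    refine HasDerivAt.congr_deriv this ?_
    simp
  refine HasDerivAt.congr_deriv (h1.fun_div h2 hD.ne') ?_
  unfold Mf
  congr 1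
  unfold Df mf
  ring

/-- The second derivative of `F_a`. -/
noncomputable def G (t x : ℝ) : ℝ := psi2 (x + 1) - Mf (mf x) t

lemma hasDerivAt_F {a x : ℝ} (ha : 1 / 15 < a) (hx : 0 < x) :
    HasDerivAt (fun x : ℝ => digamma (x + 1) - L x a) (psi1 (x + 1) - L1 (tf a) x) x :=
  ((hasDerivAt_digamma (by linarith : 1 / 2 < x + 1)).comp_add_const x 1).fun_sub
    (hasDerivAt_L ha hx)

lemma hasDerivAt_F1 {t x : ℝ} (ht : -4 / 15 < t) (hx : 0 ≤ x) :
    HasDerivAt (fun x : ℝ => psi1 (x + 1) - L1 t x) (G t x) x :=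
  ((hasDerivAt_psi1 (by linarith : 1 / 2 < x + 1)).comp_add_const x 1).fun_sub
    (hasDerivAt_L1 ht hx)

lemma hasDerivAt_deriv_F {a x : ℝ} (ha : 1 / 15 < a) (hx : 0 < x) :
    HasDerivAt (deriv (fun x : ℝ => digamma (x + 1) - L x a)) (G (tf a) x) x := by
  refine (hasDerivAt_F1 (tf_gt ha) hx.le).congr_of_eventuallyEq ?_
  filter_upwards [Ioi_mem_nhds hx] with y hy using (hasDerivAt_F ha hy).deriv

lemma convex_of {a : ℝ} (ha : 1 / 15 < a) (h : ∀ x, 0 < x → 0 ≤ G (tf a) x) :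
    ConvexOn ℝ (Set.Ioi 0) (fun x : ℝ => digamma (x + 1) - L x a) := by
  refine convexOn_of_deriv2_nonneg' (convex_Ioi 0)
    (fun x hx => (hasDerivAt_F ha hx).differentiableAt.differentiableWithinAt)
    (fun x hx => (hasDerivAt_deriv_F ha hx).differentiableAt.differentiableWithinAt)
    (fun x hx => ?_)
  have : deriv^[2] (fun x : ℝ => digamma (x + 1) - L x a) x = G (tf a) x :=
    (hasDerivAt_deriv_F ha hx).deriv
  rw [this]
  exact h x hx

lemma nonneg_of_convex {a : ℝ} (ha : 1 / 15 < a)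
    (h : ConvexOn ℝ (Set.Ioi 0) (fun x : ℝ => digamma (x + 1) - L x a)) :
    0 ≤ G (tf a) 0 := by
  have hmono := h.monotoneOn_deriv (fun x hx => (hasDerivAt_F ha hx).differentiableAt)
  have hpos : ∀ x ∈ Ioi (0 : ℝ), 0 ≤ G (tf a) x := by
    intro x hx
    have h1 := (hasDerivAt_deriv_F ha hx).hasDerivWithinAt (s := Ioi 0)
    rw [← h1.derivWithin (isOpen_Ioi.uniqueDiffWithinAt hx)]
    exact hmono.derivWithin_nonneg
  have hc : ContinuousWithinAt (G (tf a)) (Ioi 0) 0 := by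
    refine ContinuousAt.continuousWithinAt ?_
    unfold G
    refine ContinuousAt.sub ?_ ?_
    · have := continuousOn_psi2.continuousAt (x := 0 + 1) (Ioi_mem_nhds (by norm_num))
      exact ContinuousAt.comp (f := fun x : ℝ => x + 1) (x := 0) this (by fun_prop)
    · have hD := Df_pos (mf_ge (le_refl (0 : ℝ))) (tf_gt ha)
      have hne : Df (mf 0) (tf a) ^ 2 ≠ 0 := by positivity
      unfold Mf
      refine ContinuousAt.div ?_ ?_ hne
      · unfold Df mf
        fun_prop
      · unfold Df mf
        fun_prop
  exact ge_of_tendsto hc (by filter_upwards [self_mem_nhdsWithin] with x hx using hpos x hx)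

lemma eqn_iff {a : ℝ} (ha : 1 / 15 < a) :
    (3 / 2) * (2025 * a ^ 4 + 1620 * a ^ 3 + 360 * a ^ 2 - 36 * a + 1) /
              ((3 * a + 1) ^ 2 * (15 * a - 1) ^ 2) = - Mf (1 / 3) (tf a) := by
  have h1 : 0 < 15 * a - 1 := by linarith
  have h2 : 0 < 3 * a + 1 := by linarith
  have h3 : 0 < a := by linarith
  have hD : Df (1 / 3) (tf a) = (3 * a + 1) * (15 * a - 1) / (135 * a) := by
    unfold Df tf
    field_simp
    ring
  unfold Mf
  rw [hD]
  unfold tf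
  field_simp
  ring

lemma G_zero (t : ℝ) : G t 0 = psi2 1 - Mf (1 / 3) t := by
  unfold G
  rw [mf_zero, zero_add]

lemma exists_root : ∃ a₀ : ℝ, a₀ ∈ Set.Ioo (1 / 3 : ℝ) (1 / 2) ∧ psi2 1 = Mf (1 / 3) (tf a₀) := by
  have hc : ContinuousOn (fun a => Mf (1 / 3) (tf a)) (Icc (1 / 3 : ℝ) (1 / 2)) := by
    intro a ha
    have ha3 : (1 / 3 : ℝ) ≤ a := ha.1
    have hD := Df_pos (le_refl (1 / 3 : ℝ)) (tf_gt (by linarith : 1 / 15 < a))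
    have hne : Df (1 / 3) (tf a) ^ 2 ≠ 0 := by positivity
    refine ContinuousAt.continuousWithinAt ?_
    have ht : ContinuousAt tf a := by
      unfold tf
      have : 45 * a ≠ 0 := by linarith
      exact ContinuousAt.sub continuousAt_id (ContinuousAt.div (by fun_prop) (by fun_prop) this)
    unfold Mf
    refine ContinuousAt.div ?_ ?_ hne
    · unfold Df
      fun_prop
    · unfold Df
      fun_prop
  have h1 : Mf (1 / 3) (tf (1 / 3)) < psi2 1 :=
    (Mf_strictMono le_rfl (tf_gt (by norm_num)) (by norm_num [tf])).trans_le psi2_one_ge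
  have h2 : psi2 1 < Mf (1 / 3) (tf (1 / 2)) :=
    psi2_one_lt.trans (Mf_strictMono le_rfl (by norm_num) (by norm_num [tf]))
  obtain ⟨a, ha, he⟩ := intermediate_value_Ioo (by norm_num) hc ⟨h1, h2⟩
  exact ⟨a, ha, he.symm⟩

lemma Mf_mono {a b m : ℝ} (hm : 1 / 3 ≤ m) (ha : 1 / 15 < a) (h : a < b) :
    Mf m (tf a) < Mf m (tf b) :=
  Mf_strictMono hm (tf_gt ha) (tf_strictMono (by linarith) h)

end Stmt9

open Stmt9

/-- The equation ψ''(1) + (3/2)·(2025a⁴ + 1620a³ + 360a² − 36a + 1)/((3a+1)²(15a−1)²) = 0 has a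
unique root a₀'' in (1/15, ∞), with a₀'' ∈ (1/3, 1/2); and for a > 1/15, F_a is convex on
(0, ∞) iff a ∈ (1/15, a₀'']. -/
theorem stmt_9 :
    ∃ a₀ : ℝ, a₀ ∈ Set.Ioo (1 / 3 : ℝ) (1 / 2) ∧
      (∀ a ∈ Set.Ioi (1 / 15 : ℝ),
        (iteratedDeriv 2 digamma 1 +
            (3 / 2) * (2025 * a ^ 4 + 1620 * a ^ 3 + 360 * a ^ 2 - 36 * a + 1) /
              ((3 * a + 1) ^ 2 * (15 * a - 1) ^ 2) = 0) ↔ a = a₀) ∧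
      (∀ a : ℝ, 1 / 15 < a →
        (ConvexOn ℝ (Set.Ioi 0) (fun x : ℝ => digamma (x + 1) - L x a) ↔
          a ∈ Set.Ioc (1 / 15 : ℝ) a₀)) := by

  obtain ⟨a₀, ha₀, h0⟩ := exists_root
  have h15 : (1 / 15 : ℝ) < a₀ := by linarith [ha₀.1]
  have hlo : 3 / 8 ≤ tf a₀ := by
    by_contra! hh
    have := Mf_strictMono le_rfl (tf_gt h15) hh
    linarith [psi2_one_ge]
  have hhi : tf a₀ ≤ 2 / 5 := by
    by_contra! hh
    have := Mf_strictMono (le_refl (1 / 3 : ℝ)) (by norm_num) hh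
    linarith [psi2_one_lt]
  refine ⟨a₀, ha₀, ?_, ?_⟩
  · intro a ha
    have ha' : 1 / 15 < a := ha
    rw [iteratedDeriv_digamma (by norm_num), eqn_iff ha']
    constructor
    · intro he
      rcases lt_trichotomy a a₀ with h | h | h
      · have := Mf_mono (le_refl (1 / 3 : ℝ)) ha' h
        linarith
      · exact h
      · have := Mf_mono (le_refl (1 / 3 : ℝ)) h15 h
        linarith
    · rintro rfl
      linarith
  · intro a ha
    constructor
    · intro hconv
      refine ⟨ha, ?_⟩
      by_contra! h
      have h1 := nonneg_of_convex ha hconv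
      rw [G_zero] at h1
      have := Mf_mono (le_refl (1 / 3 : ℝ)) h15 h
      linarith
    · intro hmem
      refine convex_of ha (fun x hx => ?_)
      have h1 := main_ineq hlo hhi h0 hx.le
      unfold G
      rcases hmem.2.eq_or_lt with rfl | h
      · linarith
      · have := Mf_mono (mf_ge hx.le) ha h
        linarith
end
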